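/- arXiv:1302.6322 — 9 statements merged into one kernel-verified Lean document; each statement's English description precedes it below -/
import Mathlib

section
/- Suppose (P) has a KKT point (Assumption 1). Then for every μ > 0 and every y ∈ ℝ^m, g_μ(y) = sup_{z ∈ K*} { g₀(z) − (1/(2μ))‖z − y‖₂² }, and the supremum is attained at a unique point π_μ(y) ∈ K*. -/
open RealInnerProductSpace Metric

/-- The dual cone `K* = {y : ⟪y, s⟫ ≥ 0 for all s ∈ K}`. -/
def dualCone {m : ℕ} (K : Set (EuclideanSpace ℝ (Fin m))) :
    Set (EuclideanSpace ℝ (Fin m)) :=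
  {y | ∀ s ∈ K, 0 ≤ ⟪y, s⟫}

/-- The penalty Lagrangian
`L_μ(x, y) = p(x) + (μ/2)·d_K(Ax - b - y/μ)² - ‖y‖²/(2μ)`. -/
noncomputable def Lpen {n m : ℕ}
    (A : EuclideanSpace ℝ (Fin n) →L[ℝ] EuclideanSpace ℝ (Fin m))
    (b : EuclideanSpace ℝ (Fin m)) (K : Set (EuclideanSpace ℝ (Fin m)))
    (p : EuclideanSpace ℝ (Fin n) → ℝ) (μ : ℝ)
    (x : EuclideanSpace ℝ (Fin n)) (y : EuclideanSpace ℝ (Fin m)) : ℝ :=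
  p x + μ / 2 * (infDist (A x - b - μ⁻¹ • y) K) ^ 2 - ‖y‖ ^ 2 / (2 * μ)

/-- `g_μ(y) = inf_{x ∈ χ} L_μ(x, y)`. -/
noncomputable def gmu {n m : ℕ}
    (A : EuclideanSpace ℝ (Fin n) →L[ℝ] EuclideanSpace ℝ (Fin m))
    (b : EuclideanSpace ℝ (Fin m)) (K : Set (EuclideanSpace ℝ (Fin m)))
    (χ : Set (EuclideanSpace ℝ (Fin n)))
    (p : EuclideanSpace ℝ (Fin n) → ℝ) (μ : ℝ) (y : EuclideanSpace ℝ (Fin m)) : ℝ :=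
  sInf ((fun x => Lpen A b K p μ x y) '' χ)

/-- The Lagrangian dual function `g₀(z) = inf_{x ∈ χ} { p(x) - ⟪z, Ax - b⟫ }`. -/
noncomputable def gzero {n m : ℕ}
    (A : EuclideanSpace ℝ (Fin n) →L[ℝ] EuclideanSpace ℝ (Fin m))
    (b : EuclideanSpace ℝ (Fin m)) (χ : Set (EuclideanSpace ℝ (Fin n)))
    (p : EuclideanSpace ℝ (Fin n) → ℝ) (z : EuclideanSpace ℝ (Fin m)) : ℝ :=
  sInf ((fun x => p x - ⟪z, A x - b⟫) '' χ)

/-- The optimal value `p* = inf { p(x) : x ∈ χ, Ax - b ∈ K }` of the conic program (P). -/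
noncomputable def pstar {n m : ℕ}
    (A : EuclideanSpace ℝ (Fin n) →L[ℝ] EuclideanSpace ℝ (Fin m))
    (b : EuclideanSpace ℝ (Fin m)) (K : Set (EuclideanSpace ℝ (Fin m)))
    (χ : Set (EuclideanSpace ℝ (Fin n)))
    (p : EuclideanSpace ℝ (Fin n) → ℝ) : ℝ :=
  sInf (p '' {x ∈ χ | A x - b ∈ K})

/-- under Assumption 1 (existence of a KKT point), for every `μ > 0` and
every `y`, `g_μ(y) = sup_{z ∈ K*} { g₀(z) - (1/(2μ))‖z - y‖² }`, the supremum being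
attained at a unique point `π_μ(y) ∈ K*`. -/
theorem stmt_7 {n m : ℕ} (K : Set (EuclideanSpace ℝ (Fin m)))
    (hKne : K.Nonempty) (hKcl : IsClosed K) (hKcv : Convex ℝ K)
    (hKcone : ∀ (c : ℝ), 0 ≤ c → ∀ x ∈ K, c • x ∈ K)
    (A : EuclideanSpace ℝ (Fin n) →L[ℝ] EuclideanSpace ℝ (Fin m))
    (b : EuclideanSpace ℝ (Fin m))
    (χ : Set (EuclideanSpace ℝ (Fin n)))
    (hχne : χ.Nonempty) (hχcp : IsCompact χ) (hχcv : Convex ℝ χ)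
    (p : EuclideanSpace ℝ (Fin n) → ℝ) (hp : ConvexOn ℝ Set.univ p)
    (hfeas : {x ∈ χ | A x - b ∈ K}.Nonempty)
    (hKKT : ∃ ystar ∈ dualCone K, gzero A b χ p ystar = pstar A b K χ p)
    (μ : ℝ) (hμ : 0 < μ) :
    ∀ y : EuclideanSpace ℝ (Fin m), ∃! z : EuclideanSpace ℝ (Fin m),
      z ∈ dualCone K ∧
      (∀ w ∈ dualCone K,
        gzero A b χ p w - ‖w - y‖ ^ 2 / (2 * μ) ≤ gzero A b χ p z - ‖z - y‖ ^ 2 / (2 * μ)) ∧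
      gmu A b K χ p μ y = gzero A b χ p z - ‖z - y‖ ^ 2 / (2 * μ) := by
  intro y
  have hpc : Continuous p := by
    have := hp.continuousOn isOpen_univ
    exact continuousOn_univ.mp this
  have hLc : Continuous (fun x => Lpen A b K p μ x y) := by
    unfold Lpen
    have := (continuous_infDist_pt K).comp
      (show Continuous (fun x => A x - b - μ⁻¹ • y) by fun_prop)
    have h2 : Continuous (fun x => infDist (A x - b - μ⁻¹ • y) K) := this
    fun_prop
  obtain ⟨x0, hx0, hmin⟩ := hχcp.exists_isMinOn hχne hLc.continuousOn
  set v := A x0 - b - μ⁻¹ • y with hv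
  obtain ⟨s, hs, hsd⟩ := hKcl.exists_infDist_eq_dist hKne v
  have hvar : ∀ w ∈ K, ⟪v - s, w - s⟫ ≤ 0 := by
    rw [← norm_eq_iInf_iff_real_inner_le_zero hKcv hs, ← dist_eq_norm, ← hsd,
      infDist_eq_iInf]
    simp only [dist_eq_norm]
  have hs0 : ⟪v - s, s⟫ = 0 := by
    have h1 := hvar _ (hKcone 0 le_rfl s hs)
    have h2 := hvar _ (hKcone 2 (by norm_num) s hs)
    simp only [inner_sub_right, inner_smul_right] at h1 h2
    linarith
  have hsw : ∀ w ∈ K, ⟪v - s, w⟫ ≤ 0 := by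
    intro w hw
    have h1 := hvar w hw
    rw [inner_sub_right] at h1
    linarith
  set z := μ • (s - v) with hz
  have hzK : z ∈ dualCone K := by
    intro w hw
    have h1 := hsw w hw
    rw [hz, inner_smul_left, ← neg_sub v s, inner_neg_left]
    simp only [conj_trivial]
    nlinarith
  have hzs : ⟪z, s⟫ = 0 := by
    rw [hz, inner_smul_left, ← neg_sub v s, inner_neg_left, hs0]; simp
  have hvz : A x0 - b = s - μ⁻¹ • z + μ⁻¹ • y := by
    rw [hz, smul_smul, inv_mul_cancel₀ hμ.ne', hv]; simp
  have hL0 : Lpen A b K p μ x0 y = p x0 + ‖z‖ ^ 2 / (2 * μ) - ‖y‖ ^ 2 / (2 * μ) := by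
    unfold Lpen
    rw [← hv, hsd, dist_comm, dist_eq_norm, hz, norm_smul, Real.norm_of_nonneg hμ.le]
    field_simp
  have hxmin : ∀ x ∈ χ, p x0 - ⟪z, A x0 - b⟫ ≤ p x - ⟪z, A x - b⟫ := by
    intro x hx
    have key : ∀ t : ℝ, 0 < t → t ≤ 1 →
        0 ≤ (p x - p x0 - ⟪z, A (x - x0)⟫) + t * (μ / 2 * ‖A (x - x0)‖ ^ 2) := by
      intro t ht ht1
      have hxt : (1 - t) • x0 + t • x ∈ χ :=
        hχcv hx0 hx (by linarith) ht.le (by ring)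
      have h1 : Lpen A b K p μ x0 y ≤ Lpen A b K p μ ((1 - t) • x0 + t • x) y := hmin hxt
      rw [hL0] at h1
      unfold Lpen at h1
      have hpt : p ((1 - t) • x0 + t • x) ≤ (1 - t) * p x0 + t * p x := by
        simpa using hp.2 (Set.mem_univ x0) (Set.mem_univ x) (by linarith : 0 ≤ 1 - t) ht.le
          (by ring)
      have hd := infDist_le_dist_of_mem (x := A ((1 - t) • x0 + t • x) - b - μ⁻¹ • y) hs
      have hd0 := infDist_nonneg (x := A ((1 - t) • x0 + t • x) - b - μ⁻¹ • y) (s := K)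
      have hd2 := pow_le_pow_left₀ hd0 hd 2
      have he : A ((1 - t) • x0 + t • x) - b - μ⁻¹ • y - s = t • A (x - x0) - μ⁻¹ • z := by
        have : A ((1 - t) • x0 + t • x) - b - μ⁻¹ • y - s
          = (A x0 - b) + t • A (x - x0) - μ⁻¹ • y - s := by
          simp only [map_add, map_smul, map_sub]; module
        rw [this, hvz]; module
      rw [dist_eq_norm, he, norm_sub_sq_real, norm_smul, norm_smul, inner_smul_left,
        inner_smul_right, real_inner_comm, mul_pow, mul_pow] at hd2
      simp only [conj_trivial, Real.norm_eq_abs, sq_abs] at hd2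
      have hd3 := mul_le_mul_of_nonneg_left hd2 (by positivity : 0 ≤ μ / 2)
      have e : μ / 2 * (t ^ 2 * ‖A (x - x0)‖ ^ 2 - 2 * (t * (μ⁻¹ * ⟪z, A (x - x0)⟫))
          + μ⁻¹ ^ 2 * ‖z‖ ^ 2) = t * (t * (μ / 2 * ‖A (x - x0)‖ ^ 2)) - t * ⟪z, A (x - x0)⟫
          + ‖z‖ ^ 2 / (2 * μ) := by
        field_simp
      rw [e] at hd3
      refine nonneg_of_mul_nonneg_right (a := t) ?_ ht
      linarith
    have hlim : 0 ≤ p x - p x0 - ⟪z, A (x - x0)⟫ := by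
      by_contra! hneg
      set D := p x - p x0 - ⟪z, A (x - x0)⟫
      set C := μ / 2 * ‖A (x - x0)‖ ^ 2
      have hC : 0 ≤ C := by positivity
      have hpos : 0 < C - D := by linarith
      have ht1 : (-D / 2) / (C - D) ≤ 1 := by rw [div_le_one hpos]; linarith
      have h := key ((-D / 2) / (C - D)) (div_pos (by linarith) hpos) ht1
      have : (-D / 2) / (C - D) * C ≤ -D / 2 := by
        rw [div_mul_eq_mul_div, div_le_iff₀ hpos]; nlinarith
      linarith
    have : ⟪z, A (x - x0)⟫ = ⟪z, A x - b⟫ - ⟪z, A x0 - b⟫ := by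
      rw [← inner_sub_right, map_sub]; congr 1; abel
    linarith
  have hg0 : gzero A b χ p z = p x0 - ⟪z, A x0 - b⟫ := by
    refine IsLeast.csInf_eq ⟨⟨x0, hx0, rfl⟩, ?_⟩
    rintro _ ⟨x, hx, rfl⟩
    exact hxmin x hx
  have hgm : gmu A b K χ p μ y = p x0 + ‖z‖ ^ 2 / (2 * μ) - ‖y‖ ^ 2 / (2 * μ) := by
    rw [← hL0]
    refine IsLeast.csInf_eq ⟨⟨x0, hx0, rfl⟩, ?_⟩
    rintro _ ⟨x, hx, rfl⟩
    exact hmin hx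
  have hid : ∀ w, p x0 - ⟪w, A x0 - b⟫ - ‖w - y‖ ^ 2 / (2 * μ)
      = gmu A b K χ p μ y - ⟪w, s⟫ - ‖w - z‖ ^ 2 / (2 * μ) := by
    intro w
    clear_value z
    rw [hgm, hvz, norm_sub_sq_real, norm_sub_sq_real, inner_add_right, inner_sub_right,
      inner_smul_right, inner_smul_right]
    field_simp
    ring
  have hval : gmu A b K χ p μ y = gzero A b χ p z - ‖z - y‖ ^ 2 / (2 * μ) := by
    rw [hg0, hid z, hzs]; simp
  have hup : ∀ w ∈ dualCone K, gzero A b χ p w - ‖w - y‖ ^ 2 / (2 * μ)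
      ≤ gmu A b K χ p μ y - ‖w - z‖ ^ 2 / (2 * μ) := by
    intro w hw
    have h1 : gzero A b χ p w ≤ p x0 - ⟪w, A x0 - b⟫ := by
      refine csInf_le ?_ ⟨x0, hx0, rfl⟩
      exact (hχcp.image (by fun_prop)).bddBelow
    have h2 := hid w
    have h3 := hw s hs
    linarith
  refine ⟨z, ⟨hzK, ?_, hval⟩, ?_⟩
  · intro w hw
    rw [← hval]
    have := hup w hw
    have h0 : 0 ≤ ‖w - z‖ ^ 2 / (2 * μ) := by positivity
    linarith
  · rintro w ⟨hw, -, hwe⟩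
    have h1 := hup w hw
    have h2 : ‖w - z‖ ^ 2 / (2 * μ) ≤ 0 := by linarith
    by_contra hne
    have : 0 < ‖w - z‖ := norm_pos_iff.mpr (sub_ne_zero.mpr hne)
    have : 0 < ‖w - z‖ ^ 2 / (2 * μ) := by positivity
    linarith
end

section
/- Suppose (P) has a KKT point (Assumption 1) and fix μ > 0. Then g_μ is a (finite, concave) continuously differentiable function on ℝ^m with gradient ∇g_μ(y) = −(y − π_μ(y))/μ, where π_μ(y) ∈ K* is the unique maximizer of z ↦ g₀(z) − (1/(2μ))‖z − y‖₂² over K*; the gradient ∇g_μ is Lipschitz continuous with Lipschitz constant 1/μ; and every KKT point y* of (P) maximizes g_μ, i.e. g_μ(y*) = sup_{y ∈ ℝ^m} g_μ(y). -/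
open RealInnerProductSpace Metric

lemma aux_lim {a c : ℝ} (h : ∀ t : ℝ, 0 < t → t ≤ 1 → 0 ≤ t * a + t ^ 2 * c) : 0 ≤ a := by
  by_contra ha
  push Not at ha
  have h1 := h 1 one_pos le_rfl
  have hc : 0 < c := by linarith
  have hd : 0 < 2 * c := by linarith
  have ht : 0 < -a / (2 * c) := div_pos (by linarith) hd
  have ht1 : -a / (2 * c) ≤ 1 := by rw [div_le_one hd]; linarith
  have h2 := h _ ht ht1
  have h3 : -a / (2 * c) * a + (-a / (2 * c)) ^ 2 * c = -a / (2 * c) * (a / 2) := by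
    field_simp
    ring
  rw [h3] at h2
  nlinarith

lemma aux_proj {m : ℕ} (K : Set (EuclideanSpace ℝ (Fin m)))
    (hKne : K.Nonempty) (hKcl : IsClosed K) (hKcv : Convex ℝ K)
    (hKcone : ∀ (c : ℝ), 0 ≤ c → ∀ x ∈ K, c • x ∈ K) (v : EuclideanSpace ℝ (Fin m)) :
    ∃ s ∈ K, infDist v K = ‖s - v‖ ∧ ⟪s - v, s⟫ = 0 ∧ ∀ w ∈ K, 0 ≤ ⟪s - v, w⟫ := by
  obtain ⟨s, hs, hd⟩ := hKcl.exists_infDist_eq_dist hKne v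
  rw [dist_comm, dist_eq_norm] at hd
  have vi : ∀ w ∈ K, 0 ≤ ⟪s - v, w - s⟫ := by
    intro w hw
    have : 0 ≤ 2 * ⟪s - v, w - s⟫ := by
      apply aux_lim (c := ‖w - s‖ ^ 2)
      intro t ht ht1
      have hmem : s + t • (w - s) ∈ K := by
        apply hKcv.add_smul_sub_mem hs hw ⟨ht.le, ht1⟩
      have h1 := infDist_le_dist_of_mem (x := v) hmem
      rw [dist_comm, dist_eq_norm, hd] at h1
      have h2 : ‖s - v‖ ^ 2 ≤ ‖s + t • (w - s) - v‖ ^ 2 := by gcongr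
      have h3 : s + t • (w - s) - v = (s - v) + t • (w - s) := by abel
      rw [h3, norm_add_sq_real, real_inner_smul_right, norm_smul, mul_pow, Real.norm_eq_abs,
        sq_abs] at h2
      linarith
    linarith
  have h0 := vi _ (hKcone 0 le_rfl s hs)
  have h2 := vi _ (hKcone 2 (by norm_num) s hs)
  rw [inner_sub_right, real_inner_smul_right] at h0 h2
  refine ⟨s, hs, hd, by linarith, fun w hw => ?_⟩
  have := vi w hw
  rw [inner_sub_right] at this
  linarith

section
variable {n m : ℕ} {K : Set (EuclideanSpace ℝ (Fin m))}
    {A : EuclideanSpace ℝ (Fin n) →L[ℝ] EuclideanSpace ℝ (Fin m)}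
    {b : EuclideanSpace ℝ (Fin m)}
    {χ : Set (EuclideanSpace ℝ (Fin n))} {p : EuclideanSpace ℝ (Fin n) → ℝ} {μ : ℝ}

lemma aux_cont (hp : ConvexOn ℝ Set.univ p) : Continuous p := by
  rw [← continuousOn_univ]
  exact hp.continuousOn isOpen_univ

lemma aux_g0_le (hχcp : IsCompact χ) (hp : ConvexOn ℝ Set.univ p)
    (z : EuclideanSpace ℝ (Fin m)) {x : EuclideanSpace ℝ (Fin n)} (hx : x ∈ χ) :
    gzero A b χ p z ≤ p x - ⟪z, A x - b⟫ := by
  have hc := aux_cont hp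
  apply csInf_le
  · exact (hχcp.image (f := fun x => p x - ⟪z, A x - b⟫) (by fun_prop)).bddBelow
  · exact ⟨x, hx, rfl⟩

lemma aux_Lcont (hp : ConvexOn ℝ Set.univ p) (y : EuclideanSpace ℝ (Fin m)) :
    Continuous (fun x => Lpen A b K p μ x y) := by
  have hc := aux_cont hp
  have h2 : Continuous (fun x => infDist (A x - b - μ⁻¹ • y) K) :=
    (continuous_infDist_pt K).comp (by fun_prop)
  unfold Lpen
  fun_prop

lemma aux_g0_concave (hχne : χ.Nonempty) (hχcp : IsCompact χ) (hp : ConvexOn ℝ Set.univ p)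
    (w z : EuclideanSpace ℝ (Fin m)) {a c : ℝ} (ha : 0 ≤ a) (hc : 0 ≤ c) (hac : a + c = 1) :
    a * gzero A b χ p w + c * gzero A b χ p z ≤ gzero A b χ p (a • w + c • z) := by
  apply le_csInf (hχne.image _)
  rintro _ ⟨x, hx, rfl⟩
  have h1 := aux_g0_le (A := A) (b := b) hχcp hp w hx
  have h2 := aux_g0_le (A := A) (b := b) hχcp hp z hx
  simp only [inner_add_left, real_inner_smul_left]
  have e : p x = a * p x + c * p x := by rw [← add_mul, hac, one_mul]
  have h3 := mul_le_mul_of_nonneg_left h1 ha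
  have h4 := mul_le_mul_of_nonneg_left h2 hc
  rw [mul_sub] at h3 h4
  linarith

/-- weak duality -/
lemma aux_weak (hKne : K.Nonempty) (hKcl : IsClosed K) (hKcv : Convex ℝ K)
    (hKcone : ∀ (c : ℝ), 0 ≤ c → ∀ x ∈ K, c • x ∈ K)
    (hχne : χ.Nonempty) (hχcp : IsCompact χ) (hp : ConvexOn ℝ Set.univ p) (hμ : 0 < μ)
    (y : EuclideanSpace ℝ (Fin m)) {w : EuclideanSpace ℝ (Fin m)} (hw : w ∈ dualCone K) :
    gzero A b χ p w - ‖w - y‖ ^ 2 / (2 * μ) ≤ gmu A b K χ p μ y := by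
  apply le_csInf (hχne.image _)
  rintro _ ⟨x, hx, rfl⟩
  have h1 := aux_g0_le (A := A) (b := b) hχcp hp w hx
  obtain ⟨s, hs, hd, -, -⟩ := aux_proj K hKne hKcl hKcv hKcone (A x - b - μ⁻¹ • y)
  have hws := hw s hs
  simp only [Lpen, hd]
  set v := A x - b - μ⁻¹ • y with hv
  have e : A x - b = v + μ⁻¹ • y := by rw [hv]; abel
  rw [e] at h1
  have h5 : 0 ≤ ‖μ • (s - v) - w‖ ^ 2 := by positivity
  rw [norm_sub_sq_real, norm_smul, mul_pow, Real.norm_eq_abs, sq_abs, real_inner_smul_left,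
    real_inner_comm, inner_sub_right] at h5
  rw [inner_add_right, real_inner_smul_right] at h1
  rw [norm_sub_sq_real]
  have h6 : 0 ≤ (μ ^ 2 * ‖s - v‖ ^ 2 - 2 * (μ * (⟪w, s⟫ - ⟪w, v⟫)) + ‖w‖ ^ 2) / (2 * μ) :=
    div_nonneg h5 (by linarith)
  have h7 : (μ ^ 2 * ‖s - v‖ ^ 2 - 2 * (μ * (⟪w, s⟫ - ⟪w, v⟫)) + ‖w‖ ^ 2) / (2 * μ)
    = μ / 2 * ‖s - v‖ ^ 2 - ⟪w, s⟫ + ⟪w, v⟫ + ‖w‖ ^ 2 / (2 * μ) := by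
    field_simp
    ring
  have h8 : (‖w‖ ^ 2 - 2 * ⟪w, y⟫ + ‖y‖ ^ 2) / (2 * μ)
    = ‖w‖ ^ 2 / (2 * μ) - μ⁻¹ * ⟪w, y⟫ + ‖y‖ ^ 2 / (2 * μ) := by
    field_simp
  linarith

/-- strong duality -/
lemma aux_strong (hKne : K.Nonempty) (hKcl : IsClosed K) (hKcv : Convex ℝ K)
    (hKcone : ∀ (c : ℝ), 0 ≤ c → ∀ x ∈ K, c • x ∈ K)
    (hχne : χ.Nonempty) (hχcp : IsCompact χ) (hχcv : Convex ℝ χ)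
    (hp : ConvexOn ℝ Set.univ p) (hμ : 0 < μ)
    (y : EuclideanSpace ℝ (Fin m)) :
    ∃ z ∈ dualCone K, gmu A b K χ p μ y ≤ gzero A b χ p z - ‖z - y‖ ^ 2 / (2 * μ) := by
  obtain ⟨x, hx, hmin⟩ := hχcp.exists_isMinOn hχne
    (aux_Lcont (A := A) (b := b) (K := K) (μ := μ) hp y).continuousOn
  have hle : gmu A b K χ p μ y ≤ Lpen A b K p μ x y := by
    apply csInf_le
    · exact (hχcp.image (aux_Lcont (A := A) (b := b) (K := K) (μ := μ) hp y)).bddBelow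
    · exact ⟨x, hx, rfl⟩
  obtain ⟨s, hs, hd, hs0, hsK⟩ := aux_proj K hKne hKcl hKcv hKcone (A x - b - μ⁻¹ • y)
  have key : ∀ x' ∈ χ, 0 ≤ p x' - p x - μ * ⟪s - (A x - b - μ⁻¹ • y), A (x' - x)⟫ := by
    intro x' hx'
    apply aux_lim (c := μ / 2 * ‖A (x' - x)‖ ^ 2)
    intro t ht ht1
    have hmem : x + t • (x' - x) ∈ χ := hχcv.add_smul_sub_mem hx hx' ⟨ht.le, ht1⟩
    have h1 := isMinOn_iff.1 hmin _ hmem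
    simp only [Lpen, hd] at h1
    have h2 := infDist_le_dist_of_mem (x := A (x + t • (x' - x)) - b - μ⁻¹ • y) hs
    rw [dist_comm, dist_eq_norm] at h2
    have h3 := pow_le_pow_left₀ infDist_nonneg h2 2
    have e : s - (A (x + t • (x' - x)) - b - μ⁻¹ • y)
      = (s - (A x - b - μ⁻¹ • y)) - t • A (x' - x) := by
      rw [map_add, map_smul]; abel
    rw [e, norm_sub_sq_real, real_inner_smul_right, norm_smul, mul_pow, Real.norm_eq_abs,
      sq_abs] at h3
    have h4 : p (x + t • (x' - x)) ≤ (1 - t) * p x + t * p x' := by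
      have := hp.2 (Set.mem_univ x) (Set.mem_univ x') (sub_nonneg.2 ht1) ht.le (by ring)
      have e2 : x + t • (x' - x) = (1 - t) • x + t • x' := by module
      rw [e2]
      simpa using this
    have h5 := mul_le_mul_of_nonneg_left h3 (by linarith : 0 ≤ μ / 2)
    nlinarith
  simp only [Lpen, hd] at hle
  set v := A x - b - μ⁻¹ • y with hv
  have ev : A x - b = v + μ⁻¹ • y := by rw [hv]; abel
  refine ⟨μ • (s - v), ?_, ?_⟩
  · intro w hw
    rw [real_inner_smul_left]
    exact mul_nonneg hμ.le (hsK w hw)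
  · have hg : p x - ⟪μ • (s - v), A x - b⟫ ≤ gzero A b χ p (μ • (s - v)) := by
      apply le_csInf (hχne.image _)
      rintro _ ⟨x', hx', rfl⟩
      have := key x' hx'
      simp only [real_inner_smul_left, inner_sub_right, map_sub] at this ⊢
      nlinarith
    rw [ev, real_inner_smul_left, inner_add_right, real_inner_smul_right] at hg
    have e1 : ⟪s - v, v⟫ = - ‖s - v‖ ^ 2 := by
      have : ⟪s - v, s - v⟫ = ‖s - v‖ ^ 2 := real_inner_self_eq_norm_sq _
      rw [inner_sub_right, hs0] at this
      linarith
    rw [e1] at hg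
    rw [norm_sub_sq_real, real_inner_smul_left, norm_smul, mul_pow, Real.norm_eq_abs, sq_abs]
    have e3 : (μ ^ 2 * ‖s - v‖ ^ 2 - 2 * (μ * ⟪s - v, y⟫) + ‖y‖ ^ 2) / (2 * μ)
      = μ / 2 * ‖s - v‖ ^ 2 - ⟪s - v, y⟫ + ‖y‖ ^ 2 / (2 * μ) := by
      field_simp
    have e4 : μ * (-‖s - v‖ ^ 2 + μ⁻¹ * ⟪s - v, y⟫) = -(μ * ‖s - v‖ ^ 2) + ⟪s - v, y⟫ := by
      field_simp
    rw [e3]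
    rw [e4] at hg
    linarith
end

/-- under Assumption 1 and for fixed `μ > 0`, `g_μ` is a finite concave
continuously differentiable function with `∇g_μ(y) = -(y - π_μ(y))/μ`, where
`π_μ(y) ∈ K*` is the unique maximizer of `z ↦ g₀(z) - (1/(2μ))‖z - y‖²` over `K*`;
`∇g_μ` is Lipschitz with constant `1/μ`; and every KKT point `y*` maximizes `g_μ`. -/
theorem stmt_8 {n m : ℕ} (K : Set (EuclideanSpace ℝ (Fin m)))
    (hKne : K.Nonempty) (hKcl : IsClosed K) (hKcv : Convex ℝ K)
    (hKcone : ∀ (c : ℝ), 0 ≤ c → ∀ x ∈ K, c • x ∈ K)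
    (A : EuclideanSpace ℝ (Fin n) →L[ℝ] EuclideanSpace ℝ (Fin m))
    (b : EuclideanSpace ℝ (Fin m))
    (χ : Set (EuclideanSpace ℝ (Fin n)))
    (hχne : χ.Nonempty) (hχcp : IsCompact χ) (hχcv : Convex ℝ χ)
    (p : EuclideanSpace ℝ (Fin n) → ℝ) (hp : ConvexOn ℝ Set.univ p)
    (hfeas : {x ∈ χ | A x - b ∈ K}.Nonempty)
    (hKKT : ∃ ystar ∈ dualCone K, gzero A b χ p ystar = pstar A b K χ p)
    (μ : ℝ) (hμ : 0 < μ)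
    (π : EuclideanSpace ℝ (Fin m) → EuclideanSpace ℝ (Fin m))
    (hπmem : ∀ y, π y ∈ dualCone K)
    (hπmax : ∀ y, ∀ w ∈ dualCone K,
      gzero A b χ p w - ‖w - y‖ ^ 2 / (2 * μ)
        ≤ gzero A b χ p (π y) - ‖π y - y‖ ^ 2 / (2 * μ)) :
    ConcaveOn ℝ Set.univ (gmu A b K χ p μ) ∧
    (∀ y, HasGradientAt (gmu A b K χ p μ) (-(μ⁻¹ • (y - π y))) y) ∧
    (∀ y₁ y₂, ‖-(μ⁻¹ • (y₁ - π y₁)) - -(μ⁻¹ • (y₂ - π y₂))‖ ≤ (1 / μ) * ‖y₁ - y₂‖) ∧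
    (∀ ystar ∈ dualCone K, gzero A b χ p ystar = pstar A b K χ p →
      ∀ y, gmu A b K χ p μ y ≤ gmu A b K χ p μ ystar) := by
  have weak := fun y {w} hw => aux_weak (A := A) (b := b) hKne hKcl hKcv hKcone hχne hχcp hp hμ
    y (w := w) hw
  have heq : ∀ y, gmu A b K χ p μ y = gzero A b χ p (π y) - ‖π y - y‖ ^ 2 / (2 * μ) := by
    intro y
    apply le_antisymm
    · obtain ⟨z, hz, h⟩ := aux_strong (A := A) (b := b) (p := p) hKne hKcl hKcv hKcone hχne
        hχcp hχcv hp hμ y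
      exact h.trans (hπmax y z hz)
    · exact weak y (hπmem y)
  have dcv : ∀ w ∈ dualCone K, ∀ z ∈ dualCone K, ∀ a c : ℝ, 0 ≤ a → 0 ≤ c →
      a • w + c • z ∈ dualCone K := by
    intro w hw z hz a c ha hc s hs
    rw [inner_add_left, real_inner_smul_left, real_inner_smul_left]
    exact add_nonneg (mul_nonneg ha (hw s hs)) (mul_nonneg hc (hz s hs))
  have vi : ∀ y, ∀ w ∈ dualCone K, 0 ≤ μ * (gzero A b χ p (π y) - gzero A b χ p w)
      + ⟪π y - y, w - π y⟫ := by
    intro y w hw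
    apply aux_lim (c := ‖w - π y‖ ^ 2 / 2)
    intro t ht ht1
    have h1 := hπmax y _ (dcv _ (hπmem y) w hw (1 - t) t (by linarith) ht.le)
    have h2 := aux_g0_concave (A := A) (b := b) hχne hχcp hp (π y) w (sub_nonneg.2 ht1) ht.le
      (by ring)
    have e : (1 - t) • π y + t • w - y = (π y - y) + t • (w - π y) := by module
    rw [e, norm_add_sq_real, real_inner_smul_right, norm_smul, mul_pow, Real.norm_eq_abs,
      sq_abs] at h1
    have h3 := (sub_nonneg.2 h1)
    have h4 := mul_nonneg hμ.le h3
    have h5 := mul_le_mul_of_nonneg_left h2 hμ.le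
    have h6 : μ * (gzero A b χ p (π y) - ‖π y - y‖ ^ 2 / (2 * μ) -
        (gzero A b χ p ((1 - t) • π y + t • w) -
          (‖π y - y‖ ^ 2 + 2 * (t * ⟪π y - y, w - π y⟫) + t ^ 2 * ‖w - π y‖ ^ 2) / (2 * μ)))
        = μ * gzero A b χ p (π y) - μ * gzero A b χ p ((1 - t) • π y + t • w)
          + t * ⟪π y - y, w - π y⟫ + t ^ 2 * (‖w - π y‖ ^ 2 / 2) := by
      field_simp
      ring
    rw [h6] at h4
    nlinarith
  have firm : ∀ y₁ y₂, ‖π y₁ - π y₂‖ ^ 2 ≤ ⟪y₁ - y₂, π y₁ - π y₂⟫ := by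
    intro y₁ y₂
    have h1 := vi y₁ _ (hπmem y₂)
    have h2 := vi y₂ _ (hπmem y₁)
    rw [← real_inner_self_eq_norm_sq]
    have e : ⟪π y₁ - y₁, π y₂ - π y₁⟫ + ⟪π y₂ - y₂, π y₁ - π y₂⟫
      = ⟪y₁ - y₂, π y₁ - π y₂⟫ - ⟪π y₁ - π y₂, π y₁ - π y₂⟫ := by
      simp only [inner_sub_left, inner_sub_right]
      ring
    linarith
  have nonexp : ∀ y₁ y₂, ‖(y₁ - π y₁) - (y₂ - π y₂)‖ ≤ ‖y₁ - y₂‖ := by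
    intro y₁ y₂
    refine (sq_le_sq₀ (norm_nonneg _) (norm_nonneg _)).1 ?_
    have e : (y₁ - π y₁) - (y₂ - π y₂) = (y₁ - y₂) - (π y₁ - π y₂) := by abel
    rw [e, norm_sub_sq_real]
    have := firm y₁ y₂
    nlinarith [sq_nonneg ‖π y₁ - π y₂‖]
  have lower : ∀ y y', gmu A b K χ p μ y - μ⁻¹ * ⟪y - π y, y' - y⟫ - ‖y' - y‖ ^ 2 / (2 * μ)
      ≤ gmu A b K χ p μ y' := by
    intro y y'
    refine le_trans (le_of_eq ?_) (weak y' (hπmem y))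
    rw [heq y]
    have e : π y - y' = -((y - π y) + (y' - y)) := by abel
    rw [e, norm_neg, norm_add_sq_real, norm_sub_rev (π y) y]
    field_simp
    ring
  refine ⟨⟨convex_univ, ?_⟩, ?_, ?_, ?_⟩
  · intro y₁ _ y₂ _ a c ha hc hac
    refine le_trans ?_ (weak _ (dcv _ (hπmem y₁) _ (hπmem y₂) a c ha hc))
    have h1 := aux_g0_concave (A := A) (b := b) hχne hχcp hp (π y₁) (π y₂) ha hc hac
    have e : a • π y₁ + c • π y₂ - (a • y₁ + c • y₂) = a • (π y₁ - y₁) + c • (π y₂ - y₂) := by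
      module
    have h2 : ‖a • (π y₁ - y₁) + c • (π y₂ - y₂)‖ ^ 2
        ≤ a * ‖π y₁ - y₁‖ ^ 2 + c * ‖π y₂ - y₂‖ ^ 2 := by
      have h3 : ‖a • (π y₁ - y₁) + c • (π y₂ - y₂)‖ ≤ a * ‖π y₁ - y₁‖ + c * ‖π y₂ - y₂‖ := by
        refine (norm_add_le _ _).trans (le_of_eq ?_)
        rw [norm_smul, norm_smul, Real.norm_of_nonneg ha, Real.norm_of_nonneg hc]
      have h4 := pow_le_pow_left₀ (norm_nonneg _) h3 2
      obtain rfl : c = 1 - a := by linarith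
      nlinarith [mul_nonneg (mul_nonneg ha hc) (sq_nonneg (‖π y₁ - y₁‖ - ‖π y₂ - y₂‖))]
    rw [heq y₁, heq y₂, e, smul_eq_mul, smul_eq_mul]
    have h5 := div_le_div_of_nonneg_right h2 (by linarith : 0 ≤ 2 * μ)
    have e5 : (a * ‖π y₁ - y₁‖ ^ 2 + c * ‖π y₂ - y₂‖ ^ 2) / (2 * μ)
      = a * (‖π y₁ - y₁‖ ^ 2 / (2 * μ)) + c * (‖π y₂ - y₂‖ ^ 2 / (2 * μ)) := by ring
    rw [mul_sub, mul_sub]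
    linarith
  · intro y
    rw [hasGradientAt_iff_isLittleO]
    have hO : (fun y' => gmu A b K χ p μ y' - gmu A b K χ p μ y - ⟪-(μ⁻¹ • (y - π y)), y' - y⟫)
        =O[nhds y] (fun y' => ‖y' - y‖ ^ 2) := by
      apply Asymptotics.IsBigO.of_bound (2 * μ⁻¹)
      filter_upwards with y'
      rw [inner_neg_left, real_inner_smul_left, Real.norm_eq_abs, Real.norm_of_nonneg (sq_nonneg _)]
      have hμi : 0 < μ⁻¹ := inv_pos.2 hμ
      have h1 := lower y y'
      have h2 := lower y' y
      have h3 : ⟪(y - π y) - (y' - π y'), y' - y⟫ ≤ ‖y' - y‖ ^ 2 := by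
        refine (real_inner_le_norm _ _).trans ?_
        have := nonexp y y'
        rw [norm_sub_rev y y'] at this
        nlinarith [norm_nonneg (y' - y)]
      rw [norm_sub_rev y y'] at h2
      have e1 : ⟪y' - π y', y - y'⟫ = ⟪(y - π y) - (y' - π y'), y' - y⟫ - ⟪y - π y, y' - y⟫ := by
        rw [← neg_sub y' y, inner_neg_right, inner_sub_left (y - π y)]
        ring
      have e2 : ‖y' - y‖ ^ 2 / (2 * μ) = μ⁻¹ * ‖y' - y‖ ^ 2 / 2 := by
        field_simp
      rw [e1, e2] at h2
      rw [e2] at h1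
      have h4 := mul_le_mul_of_nonneg_left h3 hμi.le
      have h5 : 0 ≤ μ⁻¹ * ‖y' - y‖ ^ 2 := by positivity
      rw [abs_le]
      constructor <;> nlinarith
    refine hO.trans_isLittleO ?_
    exact Asymptotics.isLittleO_norm_left.1 (by
      simpa using (Asymptotics.isLittleO_pow_sub_sub y (one_lt_two)))
  · intro y₁ y₂
    have e : -(μ⁻¹ • (y₁ - π y₁)) - -(μ⁻¹ • (y₂ - π y₂))
      = -(μ⁻¹ • ((y₁ - π y₁) - (y₂ - π y₂))) := by module
    rw [e, norm_neg, norm_smul, Real.norm_of_nonneg (inv_pos.2 hμ).le, one_div]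
    exact mul_le_mul_of_nonneg_left (nonexp y₁ y₂) (inv_pos.2 hμ).le
  · intro ys hys hk y
    have h1 : gzero A b χ p (π y) ≤ pstar A b K χ p := by
      apply le_csInf (hfeas.image _)
      rintro _ ⟨x, ⟨hx, hxK⟩, rfl⟩
      have h2 := aux_g0_le (A := A) (b := b) hχcp hp (π y) hx
      have h3 := hπmem y _ hxK
      linarith
    have h2 := weak ys hys
    rw [sub_self, norm_zero] at h2
    have h3 : 0 ≤ ‖π y - y‖ ^ 2 / (2 * μ) := by positivity
    rw [heq y]
    norm_num at h2
    linarith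
end

section
/- Suppose (P) has a KKT point (Assumption 1). Fix μ > 0, ȳ ∈ ℝ^m and ξ ≥ 0. If x̄ ∈ χ satisfies L_μ(x̄, ȳ) ≤ g_μ(ȳ) + ξ, then μ·‖(Π_K(Ax̄ − b − ȳ/μ) − (Ax̄ − b)) − ∇g_μ(ȳ)‖₂² ≤ 2ξ, where Π_K(Ax̄ − b − ȳ/μ) − (Ax̄ − b) is the gradient of y ↦ L_μ(x̄, y) at ȳ and ∇g_μ(ȳ) denotes the gradient of g_μ at ȳ (which exists by Theorem 1 under Assumption 1). -/
open RealInnerProductSpace Metric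

theorem aux_id {E : Type*} [NormedAddCommGroup E] [InnerProductSpace ℝ E] (μ : ℝ) (hμ : 0 < μ)
    (v s y : E) : μ / 2 * ‖(v - μ⁻¹ • y) - s‖ ^ 2 - ‖y‖ ^ 2 / (2 * μ)
      = μ / 2 * ‖s - v‖ ^ 2 + inner ℝ (s - v) y := by
  have h : (v - μ⁻¹ • y) - s = -((s - v) + μ⁻¹ • y) := by abel
  rw [h, norm_neg, norm_add_sq_real, inner_smul_right, norm_smul, Real.norm_eq_abs,
    abs_of_pos (inv_pos.mpr hμ)]
  field_simp
  ring

theorem aux_cvx {E : Type*} [NormedAddCommGroup E] [InnerProductSpace ℝ E] (t : ℝ)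
    (a c : E) : ‖(1 - t) • a + t • c‖ ^ 2
      = (1 - t) * ‖a‖ ^ 2 + t * ‖c‖ ^ 2 - t * (1 - t) * ‖c - a‖ ^ 2 := by
  rw [norm_add_sq_real, norm_sub_sq_real, inner_smul_right, inner_smul_left, norm_smul, norm_smul,
    mul_pow, mul_pow, Real.norm_eq_abs, Real.norm_eq_abs, sq_abs, sq_abs, real_inner_comm c a]
  simp
  ring

theorem aux_grad {m : ℕ} (g : EuclideanSpace ℝ (Fin m) → ℝ) (G r y : EuclideanSpace ℝ (Fin m))
    (hG : HasGradientAt g G y) (h : ∀ z, g z ≤ g y + inner ℝ r (z - y)) : r = G := by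
  have h1 := hG.hasFDerivAt
  have h2 : HasFDerivAt (fun z => inner ℝ r (z - y)) (innerSL ℝ r) y := by
    have := (innerSL ℝ r).hasFDerivAt (x := y)
    have h3 := this.sub_const (inner ℝ r y)
    refine h3.congr_of_eventuallyEq (Filter.Eventually.of_forall fun z => ?_)
    simp [inner_sub_right]
  have h4 := h1.sub h2
  have hmax : IsLocalMax (fun z => g z - inner ℝ r (z - y)) y := by
    refine Filter.Eventually.of_forall fun z => ?_
    have := h z
    simp
    linarith
  have h5 := hmax.hasFDerivAt_eq_zero h4
  have h6 := congrArg (fun f => f (G - r)) h5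
  simp at h6
  rw [← inner_sub_left] at h6
  have h7 := inner_self_eq_zero.mp h6
  exact (sub_eq_zero.mp h7).symm

/-- under Assumption 1, fix `μ > 0`, `ȳ` and `ξ ≥ 0`. If `x̄ ∈ χ` satisfies
`L_μ(x̄, ȳ) ≤ g_μ(ȳ) + ξ`, then
`μ·‖(Π_K(Ax̄ - b - ȳ/μ) - (Ax̄ - b)) - ∇g_μ(ȳ)‖² ≤ 2ξ`, where
`Π_K(Ax̄ - b - ȳ/μ) - (Ax̄ - b)` is the gradient of `y ↦ L_μ(x̄, y)` at `ȳ` and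
`∇g_μ(ȳ)` the gradient of `g_μ` at `ȳ`. -/
theorem stmt_9 {n m : ℕ} (K : Set (EuclideanSpace ℝ (Fin m)))
    (hKne : K.Nonempty) (hKcl : IsClosed K) (hKcv : Convex ℝ K)
    (hKcone : ∀ (c : ℝ), 0 ≤ c → ∀ x ∈ K, c • x ∈ K)
    (A : EuclideanSpace ℝ (Fin n) →L[ℝ] EuclideanSpace ℝ (Fin m))
    (b : EuclideanSpace ℝ (Fin m))
    (χ : Set (EuclideanSpace ℝ (Fin n)))
    (hχne : χ.Nonempty) (hχcp : IsCompact χ) (hχcv : Convex ℝ χ)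
    (p : EuclideanSpace ℝ (Fin n) → ℝ) (hp : ConvexOn ℝ Set.univ p)
    (hfeas : {x ∈ χ | A x - b ∈ K}.Nonempty)
    (hKKT : ∃ ystar ∈ dualCone K, gzero A b χ p ystar = pstar A b K χ p)
    (μ : ℝ) (hμ : 0 < μ) (ybar : EuclideanSpace ℝ (Fin m)) (ξ : ℝ) (hξ : 0 ≤ ξ)
    (xbar : EuclideanSpace ℝ (Fin n)) (hxbar : xbar ∈ χ)
    (hsubopt : Lpen A b K p μ xbar ybar ≤ gmu A b K χ p μ ybar + ξ)
    -- `Pw` is the Euclidean projection of `A x̄ - b - ȳ/μ` onto `K`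
    (Pw : EuclideanSpace ℝ (Fin m)) (hPwK : Pw ∈ K)
    (hPw : ∀ s ∈ K, ‖(A xbar - b - μ⁻¹ • ybar) - Pw‖ ≤ ‖(A xbar - b - μ⁻¹ • ybar) - s‖)
    -- `Gy` is the gradient of `g_μ` at `ȳ` (it exists by Theorem 1 under Assumption 1)
    (Gy : EuclideanSpace ℝ (Fin m))
    (hGy : HasGradientAt (gmu A b K χ p μ) Gy ybar) :
    μ * ‖(Pw - (A xbar - b)) - Gy‖ ^ 2 ≤ 2 * ξ := by
  have hpc : Continuous p := by
    have := hp.continuousOn isOpen_univ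
    exact continuousOn_univ.mp this
  have hLc : ∀ y, Continuous (fun x => Lpen A b K p μ x y) := by
    intro y
    unfold Lpen
    have : Continuous (fun x => infDist (A x - b - μ⁻¹ • y) K) :=
      (continuous_infDist_pt K).comp (by fun_prop)
    fun_prop
  have hgle : ∀ y, ∀ x ∈ χ, gmu A b K χ p μ y ≤ Lpen A b K p μ x y := by
    intro y x hx
    exact csInf_le (hχcp.image (hLc y)).bddBelow ⟨x, hx, rfl⟩
  have hLle : ∀ x y, ∀ s ∈ K, Lpen A b K p μ x y
      ≤ p x + (μ / 2 * ‖s - (A x - b)‖ ^ 2 + inner ℝ (s - (A x - b)) y) := by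
    intro x y s hs
    rw [← aux_id μ hμ]
    have h1 : infDist (A x - b - μ⁻¹ • y) K ≤ ‖(A x - b - μ⁻¹ • y) - s‖ := by
      rw [← dist_eq_norm]; exact infDist_le_dist_of_mem hs
    have h2 := pow_le_pow_left₀ infDist_nonneg h1 2
    unfold Lpen
    have := mul_le_mul_of_nonneg_left h2 (half_pos hμ).le
    linarith
  have hLeq : ∀ x y, ∀ s ∈ K, infDist (A x - b - μ⁻¹ • y) K = ‖(A x - b - μ⁻¹ • y) - s‖ →
      Lpen A b K p μ x y
        = p x + (μ / 2 * ‖s - (A x - b)‖ ^ 2 + inner ℝ (s - (A x - b)) y) := by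
    intro x y s hs h
    rw [← aux_id μ hμ]
    unfold Lpen
    rw [h]
    ring
  have hbar := hLeq xbar ybar Pw hPwK (by
    apply le_antisymm
    · rw [← dist_eq_norm]; exact infDist_le_dist_of_mem hPwK
    · refine (le_infDist hKne).mpr fun s hs => ?_
      rw [dist_eq_norm]; exact hPw s hs)
  obtain ⟨xs, hxs, hmin⟩ := hχcp.exists_isMinOn hχne (hLc ybar).continuousOn
  obtain ⟨s, hs, hsd⟩ := hKcl.exists_infDist_eq_dist hKne (A xs - b - μ⁻¹ • ybar)
  rw [dist_eq_norm] at hsd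
  have hst := hLeq xs ybar s hs hsd
  have hgeq : gmu A b K χ p μ ybar = Lpen A b K p μ xs ybar := by
    apply le_antisymm (hgle ybar xs hxs)
    apply le_csInf (hχne.image _)
    rintro _ ⟨x, hx, rfl⟩
    exact hmin hx
  have hr : s - (A xs - b) = Gy := by
    apply aux_grad _ _ _ _ hGy
    intro z
    have h1 := hgle z xs hxs
    have h2 := hLle xs z s hs
    rw [hgeq, hst, inner_sub_right]
    linarith
  set r := Pw - (A xbar - b) with hrb
  have key : ∀ t : ℝ, 0 < t → t < 1 → (1 - t) * (μ * ‖r - Gy‖ ^ 2) ≤ 2 * ξ := by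
    intro t ht0 ht1
    have hx : (1 - t) • xs + t • xbar ∈ χ := hχcv hxs hxbar (by linarith) ht0.le (by ring)
    have hk : (1 - t) • s + t • Pw ∈ K := hKcv hs hPwK (by linarith) ht0.le (by ring)
    have h1 := (hgle ybar _ hx).trans (hLle _ ybar _ hk)
    have h2 := hp.2 (Set.mem_univ xs) (Set.mem_univ xbar) (by linarith : 0 ≤ 1 - t) ht0.le (by ring)
    have h3 : (1 - t) • s + t • Pw - (A ((1 - t) • xs + t • xbar) - b) = (1 - t) • Gy + t • r := by
      rw [← hr, hrb, map_add, map_smul, map_smul]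
      module
    rw [h3, aux_cvx, inner_add_left, real_inner_smul_left, real_inner_smul_left] at h1
    rw [hr] at hst
    simp only [smul_eq_mul] at h2
    have h4 : t * ((1 - t) * (μ * ‖r - Gy‖ ^ 2)) ≤ t * (2 * ξ) := by
      have h5 : t * Lpen A b K p μ xbar ybar ≤ t * (Lpen A b K p μ xs ybar + ξ) := by
        rw [← hgeq]; exact mul_le_mul_of_nonneg_left hsubopt ht0.le
      rw [hgeq] at h1
      rw [hbar] at h5
      rw [hst] at h1 h5
      linarith
    exact le_of_mul_le_mul_left h4 ht0
  have hlim : Filter.Tendsto (fun t : ℝ => (1 - t) * (μ * ‖r - Gy‖ ^ 2)) (nhdsWithin 0 (Set.Ioi 0))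
      (nhds (μ * ‖r - Gy‖ ^ 2)) := by
    have : Continuous (fun t : ℝ => (1 - t) * (μ * ‖r - Gy‖ ^ 2)) := by fun_prop
    have h := this.tendsto 0
    simp only [sub_zero, one_mul] at h
    exact h.mono_left nhdsWithin_le_nhds
  refine le_of_tendsto hlim ?_
  filter_upwards [Ioo_mem_nhdsGT (zero_lt_one' ℝ)] with t ht
  exact key t ht.1 ht.2
end

section
/- Fix μ > 0, ȳ ∈ ℝ^m, α ≥ 0 and η ≥ 0, and let χ*_μ = argmin_{x ∈ χ} L_μ(x, ȳ), which is nonempty by compactness of χ. Suppose x̄ ∈ χ satisfies at least one of: (a) L_μ(x̄, ȳ) ≤ g_μ(ȳ) + α; or (b) there exists q ∈ ℝⁿ with ‖q‖₂ ≤ η/μ such that (1/μ)·L_μ(x, ȳ) ≥ (1/μ)·L_μ(x̄, ȳ) + ⟨q, x − x̄⟩ for all x ∈ χ. Then 0 ≤ L_μ(x̄, ȳ) − g_μ(ȳ) ≤ max{ α, η · d_{χ*_μ}(x̄) }, where d_{χ*_μ}(x̄) = inf_{x ∈ χ*_μ} ‖x − x̄‖₂. -/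
open RealInnerProductSpace Metric

/-- fix `μ > 0`, `ȳ`, `α ≥ 0`, `η ≥ 0`, and let
`χ*_μ = argmin_{x ∈ χ} L_μ(x, ȳ)`. If `x̄ ∈ χ` satisfies either
(a) `L_μ(x̄, ȳ) ≤ g_μ(ȳ) + α`, or (b) there is `q` with `‖q‖ ≤ η/μ` such that
`(1/μ)L_μ(x, ȳ) ≥ (1/μ)L_μ(x̄, ȳ) + ⟪q, x - x̄⟫` for all `x ∈ χ`, then
`0 ≤ L_μ(x̄, ȳ) - g_μ(ȳ) ≤ max{α, η·d_{χ*_μ}(x̄)}`. -/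
theorem stmt_11 {n m : ℕ} (K : Set (EuclideanSpace ℝ (Fin m)))
    (hKne : K.Nonempty) (hKcl : IsClosed K) (hKcv : Convex ℝ K)
    (hKcone : ∀ (c : ℝ), 0 ≤ c → ∀ x ∈ K, c • x ∈ K)
    (A : EuclideanSpace ℝ (Fin n) →L[ℝ] EuclideanSpace ℝ (Fin m))
    (b : EuclideanSpace ℝ (Fin m))
    (χ : Set (EuclideanSpace ℝ (Fin n)))
    (hχne : χ.Nonempty) (hχcp : IsCompact χ) (hχcv : Convex ℝ χ)
    (p : EuclideanSpace ℝ (Fin n) → ℝ) (hp : ConvexOn ℝ Set.univ p)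
    (μ : ℝ) (hμ : 0 < μ) (ybar : EuclideanSpace ℝ (Fin m))
    (α η : ℝ) (hα : 0 ≤ α) (hη : 0 ≤ η)
    (xbar : EuclideanSpace ℝ (Fin n)) (hxbar : xbar ∈ χ)
    (hcase :
      (Lpen A b K p μ xbar ybar ≤ gmu A b K χ p μ ybar + α) ∨
      (∃ q : EuclideanSpace ℝ (Fin n), ‖q‖ ≤ η / μ ∧ ∀ x ∈ χ,
        (1 / μ) * Lpen A b K p μ xbar ybar + ⟪q, x - xbar⟫
          ≤ (1 / μ) * Lpen A b K p μ x ybar)) :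
    0 ≤ Lpen A b K p μ xbar ybar - gmu A b K χ p μ ybar ∧
    Lpen A b K p μ xbar ybar - gmu A b K χ p μ ybar
      ≤ max α (η * infDist xbar {z ∈ χ | ∀ x ∈ χ, Lpen A b K p μ z ybar ≤ Lpen A b K p μ x ybar}) := by
  have hpc : Continuous p := continuousOn_univ.1 (hp.continuousOn isOpen_univ)
  have hcont : Continuous (fun x => Lpen A b K p μ x ybar) := by
    unfold Lpen
    have h1 : Continuous (fun x => infDist (A x - b - μ⁻¹ • ybar) K) :=
      (continuous_infDist_pt K).comp (by fun_prop)
    fun_prop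
  obtain ⟨z₀, hz₀, hmin⟩ := hχcp.exists_isMinOn hχne hcont.continuousOn
  have hmin' : ∀ x ∈ χ, Lpen A b K p μ z₀ ybar ≤ Lpen A b K p μ x ybar := fun x hx => hmin hx
  have hg : gmu A b K χ p μ ybar = Lpen A b K p μ z₀ ybar := by
    unfold gmu
    apply IsLeast.csInf_eq
    refine ⟨⟨z₀, hz₀, rfl⟩, ?_⟩
    rintro _ ⟨x, hx, rfl⟩
    exact hmin' x hx
  rw [hg] at hcase ⊢
  refine ⟨sub_nonneg.2 (hmin' _ hxbar), ?_⟩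
  rcases hcase with h | ⟨q, hq, h⟩
  · exact le_max_of_le_left (by linarith)
  · apply le_max_of_le_right
    have key : ∀ z ∈ {z ∈ χ | ∀ x ∈ χ, Lpen A b K p μ z ybar ≤ Lpen A b K p μ x ybar},
        Lpen A b K p μ xbar ybar - Lpen A b K p μ z₀ ybar ≤ η * dist xbar z := by
      rintro z ⟨hz, hzm⟩
      have h1 := h z hz
      have h2 := hzm z₀ hz₀
      have h3 : -⟪q, z - xbar⟫ ≤ η / μ * dist xbar z := by
        have h4 := neg_le_of_abs_le (abs_real_inner_le_norm q (z - xbar))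
        have h5 : ‖q‖ * ‖z - xbar‖ ≤ η / μ * ‖z - xbar‖ := by gcongr
        rw [dist_comm, dist_eq_norm]
        linarith
      have h6 : (1 / μ) * (Lpen A b K p μ xbar ybar - Lpen A b K p μ z ybar)
          ≤ (1 / μ) * (η * dist xbar z) := by
        have : (1 / μ) * (η * dist xbar z) = η / μ * dist xbar z := by ring
        rw [this]; linarith
      have h7 := le_of_mul_le_mul_left h6 (by positivity)
      linarith
    have hz₀m : z₀ ∈ {z ∈ χ | ∀ x ∈ χ, Lpen A b K p μ z ybar ≤ Lpen A b K p μ x ybar} :=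
      ⟨hz₀, hmin'⟩
    rcases hη.eq_or_lt with h0 | h0
    · have := key z₀ hz₀m
      rw [← h0] at this ⊢
      simpa using this
    · rw [← div_le_iff₀' h0, le_infDist ⟨z₀, hz₀m⟩]
      intro z hz
      rw [div_le_iff₀' h0]
      exact key z hz
end

section
/- Let y* be a KKT point of (P). Then for every x ∈ χ, every y ∈ ℝ^m and every μ > 0, p(x) − p* ≥ −‖y*‖₂ · d_K(Ax − b − y/μ) + ⟨y, y*⟩/μ. -/
open RealInnerProductSpace Metric

/-- if `y*` is a KKT point of (P), then for every `x ∈ χ`, `y ∈ ℝ^m` and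
`μ > 0`, `p(x) - p* ≥ -‖y*‖·d_K(Ax - b - y/μ) + ⟪y, y*⟫/μ`. -/
theorem stmt_12 {n m : ℕ} (K : Set (EuclideanSpace ℝ (Fin m)))
    (hKne : K.Nonempty) (hKcl : IsClosed K) (hKcv : Convex ℝ K)
    (hKcone : ∀ (c : ℝ), 0 ≤ c → ∀ x ∈ K, c • x ∈ K)
    (A : EuclideanSpace ℝ (Fin n) →L[ℝ] EuclideanSpace ℝ (Fin m))
    (b : EuclideanSpace ℝ (Fin m))
    (χ : Set (EuclideanSpace ℝ (Fin n)))
    (hχne : χ.Nonempty) (hχcp : IsCompact χ) (hχcv : Convex ℝ χ)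
    (p : EuclideanSpace ℝ (Fin n) → ℝ) (hp : ConvexOn ℝ Set.univ p)
    (hfeas : {x ∈ χ | A x - b ∈ K}.Nonempty)
    (ystar : EuclideanSpace ℝ (Fin m)) (hystar : ystar ∈ dualCone K)
    (hKKT : gzero A b χ p ystar = pstar A b K χ p) :
    ∀ x ∈ χ, ∀ y : EuclideanSpace ℝ (Fin m), ∀ μ : ℝ, 0 < μ →
      -‖ystar‖ * infDist (A x - b - μ⁻¹ • y) K + ⟪y, ystar⟫ / μ
        ≤ p x - pstar A b K χ p := by
  intro x hx y μ hμ
  have hpc : Continuous p :=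
    continuousOn_univ.1 (hp.continuousOn isOpen_univ)
  have hc : Continuous (fun x => p x - ⟪ystar, A x - b⟫) := by fun_prop
  have hbd : BddBelow ((fun x => p x - ⟪ystar, A x - b⟫) '' χ) :=
    (hχcp.image hc).bddBelow
  have h1 : pstar A b K χ p ≤ p x - ⟪ystar, A x - b⟫ := by
    rw [← hKKT]
    exact csInf_le hbd ⟨x, hx, rfl⟩
  obtain ⟨s, hs, hd⟩ := hKcl.exists_infDist_eq_dist hKne (A x - b - μ⁻¹ • y)
  rw [hd, dist_eq_norm]
  have h2 : 0 ≤ ⟪ystar, s⟫ := hystar s hs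
  have h3 := (abs_le.1 (abs_real_inner_le_norm ystar (A x - b - μ⁻¹ • y - s))).1
  have h4 : ⟪ystar, A x - b - μ⁻¹ • y - s⟫
      = ⟪ystar, A x - b⟫ - ⟪y, ystar⟫ / μ - ⟪ystar, s⟫ := by
    rw [inner_sub_right, inner_sub_right _ (A x - b), real_inner_smul_right,
      real_inner_comm ystar y, div_eq_inv_mul]
  rw [h4] at h3
  linarith
end

section
/- Fix μ > 0, ȳ ∈ ℝ^m and ξ ≥ 0, and let x* be an optimal solution of (P), i.e. x* ∈ χ, Ax* − b ∈ K and p(x*) = p*. If x̄ ∈ χ satisfies L_μ(x̄, ȳ) ≤ L_μ(x*, ȳ) + ξ, then p(x̄) + (μ/2)·d_K(Ax̄ − b − ȳ/μ)² ≤ p* + ξ + ‖ȳ‖₂²/(2μ); in particular p(x̄) − p* ≤ ξ + ‖ȳ‖₂²/(2μ). -/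
open RealInnerProductSpace Metric

/-- fix `μ > 0`, `ȳ`, `ξ ≥ 0`, and let `x*` be an optimal solution of (P).
If `x̄ ∈ χ` satisfies `L_μ(x̄, ȳ) ≤ L_μ(x*, ȳ) + ξ`, then
`p(x̄) + (μ/2)·d_K(Ax̄ - b - ȳ/μ)² ≤ p* + ξ + ‖ȳ‖²/(2μ)`; in particular
`p(x̄) - p* ≤ ξ + ‖ȳ‖²/(2μ)`. -/
theorem stmt_14 {n m : ℕ} (K : Set (EuclideanSpace ℝ (Fin m)))
    (hKne : K.Nonempty) (hKcl : IsClosed K) (hKcv : Convex ℝ K)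
    (hKcone : ∀ (c : ℝ), 0 ≤ c → ∀ x ∈ K, c • x ∈ K)
    (A : EuclideanSpace ℝ (Fin n) →L[ℝ] EuclideanSpace ℝ (Fin m))
    (b : EuclideanSpace ℝ (Fin m))
    (χ : Set (EuclideanSpace ℝ (Fin n)))
    (hχne : χ.Nonempty) (hχcp : IsCompact χ) (hχcv : Convex ℝ χ)
    (p : EuclideanSpace ℝ (Fin n) → ℝ) (hp : ConvexOn ℝ Set.univ p)
    (μ : ℝ) (hμ : 0 < μ) (ybar : EuclideanSpace ℝ (Fin m)) (ξ : ℝ) (hξ : 0 ≤ ξ)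
    (xstar : EuclideanSpace ℝ (Fin n)) (hxstarχ : xstar ∈ χ)
    (hxstarK : A xstar - b ∈ K) (hxstaropt : p xstar = pstar A b K χ p)
    (xbar : EuclideanSpace ℝ (Fin n)) (hxbar : xbar ∈ χ)
    (h : Lpen A b K p μ xbar ybar ≤ Lpen A b K p μ xstar ybar + ξ) :
    p xbar + μ / 2 * (infDist (A xbar - b - μ⁻¹ • ybar) K) ^ 2
        ≤ pstar A b K χ p + ξ + ‖ybar‖ ^ 2 / (2 * μ) ∧
    p xbar - pstar A b K χ p ≤ ξ + ‖ybar‖ ^ 2 / (2 * μ) := by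
  have hd : infDist (A xstar - b - μ⁻¹ • ybar) K ≤ μ⁻¹ * ‖ybar‖ := by
    refine (infDist_le_dist_of_mem hxstarK).trans (le_of_eq ?_)
    rw [dist_eq_norm, sub_sub_cancel_left, norm_neg, norm_smul, Real.norm_of_nonneg
      (inv_nonneg.mpr hμ.le)]
  have hsq := pow_le_pow_left₀ infDist_nonneg hd 2
  have h2 := mul_le_mul_of_nonneg_left hsq (by positivity : 0 ≤ μ / 2)
  have h3 : μ / 2 * (μ⁻¹ * ‖ybar‖) ^ 2 = ‖ybar‖ ^ 2 / (2 * μ) := by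
    field_simp
  have h4 : 0 ≤ μ / 2 * (infDist (A xbar - b - μ⁻¹ • ybar) K) ^ 2 := by positivity
  unfold Lpen at h
  constructor <;> linarith
end

section
/- Fix x ∈ ℝⁿ, y ∈ ℝ^m and μ > 0, and define the dual update y⁺ = μ·( Π_K(Ax − b − y/μ) − (Ax − b − y/μ) ). Then y⁺ ∈ K* and d_K(Ax − b) ≤ ( ‖y‖₂ + ‖y⁺ − y‖₂ ) / μ. -/
open RealInnerProductSpace Metric

/-- fix `x`, `y`, `μ > 0`, set `w = Ax - b - y/μ` and define the dual
update `y⁺ = μ·(Π_K(w) - w)`. Then `y⁺ ∈ K*` and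
`d_K(Ax - b) ≤ (‖y‖ + ‖y⁺ - y‖)/μ`. -/
theorem stmt_15 {n m : ℕ} (K : Set (EuclideanSpace ℝ (Fin m)))
    (hKne : K.Nonempty) (hKcl : IsClosed K) (hKcv : Convex ℝ K)
    (hKcone : ∀ (c : ℝ), 0 ≤ c → ∀ x ∈ K, c • x ∈ K)
    (A : EuclideanSpace ℝ (Fin n) →L[ℝ] EuclideanSpace ℝ (Fin m))
    (b : EuclideanSpace ℝ (Fin m))
    (x : EuclideanSpace ℝ (Fin n)) (y : EuclideanSpace ℝ (Fin m)) (μ : ℝ) (hμ : 0 < μ)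
    (w : EuclideanSpace ℝ (Fin m)) (hw : w = A x - b - μ⁻¹ • y)
    -- `Pw` is the Euclidean projection of `w` onto `K`
    (Pw : EuclideanSpace ℝ (Fin m)) (hPwK : Pw ∈ K)
    (hPw : ∀ s ∈ K, ‖w - Pw‖ ≤ ‖w - s‖)
    (yplus : EuclideanSpace ℝ (Fin m)) (hyplus : yplus = μ • (Pw - w)) :
    yplus ∈ dualCone K ∧
    infDist (A x - b) K ≤ (‖y‖ + ‖yplus - y‖) / μ := by
  constructor
  · intro s hs
    rw [hyplus, real_inner_smul_left]
    refine mul_nonneg hμ.le ?_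
    have key : ∀ t : ℝ, 0 ≤ t → 0 ≤ 2 * t * ⟪Pw - w, s⟫ + t ^ 2 * ‖s‖ ^ 2 := by
      intro t ht
      have hmem : Pw + t • s ∈ K := by
        have h1 := hKcv hPwK (hKcone t ht s hs) (by norm_num : (0:ℝ) ≤ 1/2)
          (by norm_num : (0:ℝ) ≤ 1/2) (by norm_num)
        have h2 := hKcone 2 (by norm_num) _ h1
        have e : (2:ℝ) • ((1/2:ℝ) • Pw + (1/2:ℝ) • t • s) = Pw + t • s := by
          module
        rwa [e] at h2
      have h := hPw _ hmem
      rw [norm_sub_rev w Pw, norm_sub_rev w (Pw + t • s)] at h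
      have e2 : Pw + t • s - w = (Pw - w) + t • s := by abel
      rw [e2] at h
      have h3 := norm_add_sq_real (Pw - w) (t • s)
      rw [real_inner_smul_right, norm_smul, mul_pow, Real.norm_eq_abs, sq_abs] at h3
      have h4 := pow_le_pow_left₀ (norm_nonneg _) h 2
      linarith
    by_contra! hneg
    set a : ℝ := ⟪Pw - w, s⟫ with ha
    have hN : 0 ≤ ‖s‖ ^ 2 := by positivity
    have hN1 : 0 < ‖s‖ ^ 2 + 1 := by positivity
    have ht : 0 < -a / (‖s‖ ^ 2 + 1) := div_pos (by linarith) hN1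
    have hk := key _ ht.le
    have e : -a / (‖s‖ ^ 2 + 1) * (‖s‖ ^ 2 + 1) = -a := div_mul_cancel₀ _ hN1.ne'
    generalize -a / (‖s‖ ^ 2 + 1) = t at *
    have : t * (2 * a + t * ‖s‖ ^ 2) < 0 := mul_neg_of_pos_of_neg ht (by nlinarith)
    nlinarith
  · have h1 : infDist (A x - b) K ≤ dist (A x - b) Pw := infDist_le_dist_of_mem hPwK
    have h2 : A x - b - Pw = -(μ⁻¹ • (yplus - y)) := by
      rw [hyplus, smul_sub, smul_smul, inv_mul_cancel₀ hμ.ne', hw]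
      module
    rw [dist_eq_norm, h2, norm_neg, norm_smul, Real.norm_eq_abs,
      abs_of_pos (inv_pos.mpr hμ)] at h1
    rw [add_div, div_eq_inv_mul ‖yplus - y‖]
    have : 0 ≤ ‖y‖ / μ := by positivity
    linarith
end

section
/- Suppose (P) has a KKT point y* (Assumption 1). Let β > 1, μ₀ > 0 and μ_k = β^k·μ₀ for k ≥ 1; let {ξ_k}_{k≥1} ⊂ [0, ∞) satisfy Σ_{k=1}^∞ √(2 ξ_k μ_k) < ∞ and ξ_k ≤ C₀/μ_k for some C₀ ≥ 0 and all k. Let {x_k}_{k≥1} ⊆ χ, y₁ = 0, y_{k+1} = μ_k·( Π_K(Ax_k − b − y_k/μ_k) − (Ax_k − b − y_k/μ_k) ), and suppose L_{μ_k}(x_k, y_k) ≤ g_{μ_k}(y_k) + ξ_k for all k ≥ 1. Then there exists a constant C such that for all k ≥ 1: d_K(Ax_k − b) ≤ C·β^{−k} and |p(x_k) − p*| ≤ C·β^{−k}. -/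
open RealInnerProductSpace Metric

/-- geometric convergence rate of ALCC. With a KKT point `y*`,
`μ_k = β^k μ₀` (`β > 1`), `Σ_{k≥1} √(2 ξ_k μ_k) < ∞`, `ξ_k ≤ C₀/μ_k`, dual updates
`y₁ = 0`, `y_{k+1} = μ_k (Π_K(Ax_k - b - y_k/μ_k) - (Ax_k - b - y_k/μ_k))`, and
`L_{μ_k}(x_k, y_k) ≤ g_{μ_k}(y_k) + ξ_k`, there is a constant `C` with
`d_K(Ax_k - b) ≤ C β^{-k}` and `|p(x_k) - p*| ≤ C β^{-k}` for all `k ≥ 1`. -/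
theorem stmt_17 {n m : ℕ} (K : Set (EuclideanSpace ℝ (Fin m)))
    (hKne : K.Nonempty) (hKcl : IsClosed K) (hKcv : Convex ℝ K)
    (hKcone : ∀ (c : ℝ), 0 ≤ c → ∀ x ∈ K, c • x ∈ K)
    (A : EuclideanSpace ℝ (Fin n) →L[ℝ] EuclideanSpace ℝ (Fin m))
    (b : EuclideanSpace ℝ (Fin m))
    (χ : Set (EuclideanSpace ℝ (Fin n)))
    (hχne : χ.Nonempty) (hχcp : IsCompact χ) (hχcv : Convex ℝ χ)
    (p : EuclideanSpace ℝ (Fin n) → ℝ) (hp : ConvexOn ℝ Set.univ p)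
    (hfeas : {x ∈ χ | A x - b ∈ K}.Nonempty)
    (ystar : EuclideanSpace ℝ (Fin m)) (hystar : ystar ∈ dualCone K)
    (hKKT : gzero A b χ p ystar = pstar A b K χ p)
    -- `PK` is the Euclidean projection onto `K`
    (PK : EuclideanSpace ℝ (Fin m) → EuclideanSpace ℝ (Fin m))
    (hPKmem : ∀ v, PK v ∈ K)
    (hPK : ∀ v, ∀ s ∈ K, ‖v - PK v‖ ≤ ‖v - s‖)
    (β μ₀ : ℝ) (hβ : 1 < β) (hμ₀ : 0 < μ₀)
    (μ : ℕ → ℝ) (hμ : ∀ k, 1 ≤ k → μ k = β ^ k * μ₀)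
    (ξ : ℕ → ℝ) (hξ : ∀ k, 1 ≤ k → 0 ≤ ξ k)
    (hsum : Summable (fun k : ℕ => Real.sqrt (2 * ξ (k + 1) * μ (k + 1))))
    (C₀ : ℝ) (hC₀ : 0 ≤ C₀) (hξμ : ∀ k, 1 ≤ k → ξ k ≤ C₀ / μ k)
    (x : ℕ → EuclideanSpace ℝ (Fin n)) (hx : ∀ k, 1 ≤ k → x k ∈ χ)
    (y : ℕ → EuclideanSpace ℝ (Fin m)) (hy1 : y 1 = 0)
    (hyrec : ∀ k, 1 ≤ k → y (k + 1)
      = μ k • (PK (A (x k) - b - (μ k)⁻¹ • y k) - (A (x k) - b - (μ k)⁻¹ • y k)))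
    (hL : ∀ k, 1 ≤ k →
      Lpen A b K p (μ k) (x k) (y k) ≤ gmu A b K χ p (μ k) (y k) + ξ k) :
    ∃ C : ℝ, ∀ k, 1 ≤ k →
      infDist (A (x k) - b) K ≤ C / β ^ k ∧
      |p (x k) - pstar A b K χ p| ≤ C / β ^ k := by
  have hpc : Continuous p := by
    rw [← continuousOn_univ]
    exact hp.continuousOn isOpen_univ
  obtain ⟨B, hB⟩ := hχcp.bddBelow_image hpc.continuousOn
  have hB' : ∀ z ∈ χ, B ≤ p z := fun z hz => hB ⟨z, hz, rfl⟩
  have hμpos : ∀ k, 1 ≤ k → 0 < μ k := fun k hk => by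
    rw [hμ k hk]; positivity
  -- lower bound through the KKT point
  have hlow : ∀ z ∈ χ, pstar A b K χ p ≤ p z - ⟪ystar, A z - b⟫ := by
    intro z hz
    rw [← hKKT]
    refine csInf_le ?_ ⟨z, hz, rfl⟩
    refine hχcp.bddBelow_image (Continuous.continuousOn ?_)
    fun_prop
  -- upper bound of the augmented dual function
  have hup : ∀ k, 1 ≤ k → gmu A b K χ p (μ k) (y k) ≤ pstar A b K χ p := by
    intro k hk
    have hm := hμpos k hk
    refine le_csInf (hfeas.image p) ?_
    rintro _ ⟨z, ⟨hz, hzK⟩, rfl⟩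
    have h1 : gmu A b K χ p (μ k) (y k) ≤ Lpen A b K p (μ k) z (y k) := by
      refine csInf_le ⟨B - ‖y k‖ ^ 2 / (2 * μ k), ?_⟩ ⟨z, hz, rfl⟩
      rintro _ ⟨w, hw, rfl⟩
      have := hB' w hw
      have h2 : 0 ≤ μ k / 2 * (infDist (A w - b - (μ k)⁻¹ • y k) K) ^ 2 := by positivity
      simp only [Lpen]
      linarith
    refine h1.trans ?_
    have h3 : infDist (A z - b - (μ k)⁻¹ • y k) K ≤ ‖y k‖ / μ k := by
      refine (infDist_le_dist_of_mem hzK).trans_eq ?_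
      rw [dist_eq_norm, sub_sub_cancel_left, norm_neg, norm_smul, norm_inv,
        Real.norm_of_nonneg hm.le]
      field_simp
    have h4 : (infDist (A z - b - (μ k)⁻¹ • y k) K) ^ 2 ≤ (‖y k‖ / μ k) ^ 2 :=
      pow_le_pow_left₀ infDist_nonneg h3 2
    have h5 : μ k / 2 * (infDist (A z - b - (μ k)⁻¹ • y k) K) ^ 2
        ≤ μ k / 2 * (‖y k‖ / μ k) ^ 2 := by gcongr
    have h6 : μ k / 2 * (‖y k‖ / μ k) ^ 2 = ‖y k‖ ^ 2 / (2 * μ k) := by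
      field_simp
    simp only [Lpen]
    linarith
  -- the projection point
  have hstep : ∀ k, 1 ≤ k → ∃ s ∈ K, A (x k) - b = s - (μ k)⁻¹ • (y (k + 1) - y k) ∧
      p (x k) + (‖y (k + 1)‖ ^ 2 - ‖y k‖ ^ 2) / (2 * μ k) ≤ pstar A b K χ p + ξ k := by
    intro k hk
    have hm := hμpos k hk
    have hr := hyrec k hk
    set w := A (x k) - b - (μ k)⁻¹ • y k with hw
    refine ⟨PK w, hPKmem w, ?_, ?_⟩
    · rw [hr, smul_sub, smul_smul, inv_mul_cancel₀ hm.ne', one_smul, hw]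
      abel
    · have h1 : infDist w K = ‖y (k + 1)‖ / μ k := by
        have h2 : infDist w K = ‖w - PK w‖ := by
          apply le_antisymm
          · rw [← dist_eq_norm]; exact infDist_le_dist_of_mem (hPKmem w)
          · refine (le_infDist hKne).2 fun s hs => ?_
            rw [dist_eq_norm]; exact hPK w s hs
        rw [h2, hr, norm_smul, Real.norm_of_nonneg hm.le, norm_sub_rev]
        field_simp
      have h3 := (hL k hk).trans (add_le_add_left (hup k hk) (ξ k))
      simp only [Lpen] at h3
      rw [← hw, h1] at h3
      have h6 : μ k / 2 * (‖y (k + 1)‖ / μ k) ^ 2 = ‖y (k + 1)‖ ^ 2 / (2 * μ k) := by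
        field_simp
      rw [sub_div]
      linarith
  have hlow2 : ∀ k, 1 ≤ k →
      pstar A b K χ p - (μ k)⁻¹ * ⟪ystar, y (k + 1) - y k⟫ ≤ p (x k) := by
    intro k hk
    obtain ⟨s, hs, hu, -⟩ := hstep k hk
    have h1 := hlow (x k) (hx k hk)
    rw [hu, inner_sub_right, inner_smul_right] at h1
    have := hystar s hs
    linarith
  have hfej : ∀ k, 1 ≤ k → ‖y (k + 1) - ystar‖ ≤ ‖y k - ystar‖ + √(2 * ξ k * μ k) := by
    intro k hk
    have hm := hμpos k hk
    obtain ⟨s, hs, hu, h1⟩ := hstep k hk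
    have h2 := hlow2 k hk
    have h3 : (‖y (k + 1)‖ ^ 2 - ‖y k‖ ^ 2) / (2 * μ k)
        - (μ k)⁻¹ * ⟪ystar, y (k + 1) - y k⟫ ≤ ξ k := by linarith
    have h4 : ‖y (k + 1)‖ ^ 2 - ‖y k‖ ^ 2 - 2 * ⟪ystar, y (k + 1) - y k⟫
        ≤ 2 * ξ k * μ k := by
      have := mul_le_mul_of_nonneg_left h3 (by positivity : 0 ≤ 2 * μ k)
      have e : 2 * μ k * ((‖y (k + 1)‖ ^ 2 - ‖y k‖ ^ 2) / (2 * μ k)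
        - (μ k)⁻¹ * ⟪ystar, y (k + 1) - y k⟫) =
        ‖y (k + 1)‖ ^ 2 - ‖y k‖ ^ 2 - 2 * ⟪ystar, y (k + 1) - y k⟫ := by
        field_simp
      linarith
    have h5 : ‖y (k + 1) - ystar‖ ^ 2 ≤ ‖y k - ystar‖ ^ 2 + 2 * ξ k * μ k := by
      rw [norm_sub_sq_real, norm_sub_sq_real, real_inner_comm, real_inner_comm ystar (y k)]
      rw [inner_sub_right] at h4
      linarith
    have h6 : 0 ≤ 2 * ξ k * μ k := by
      have := hξ k hk
      positivity
    have h7 := Real.sq_sqrt h6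
    have h8 := Real.sqrt_nonneg (2 * ξ k * μ k)
    refine (pow_le_pow_iff_left₀ (norm_nonneg _) (by positivity) two_ne_zero).1 ?_
    nlinarith [mul_nonneg (norm_nonneg (y k - ystar)) h8]
  have hsumb : ∀ j, ‖y (j + 1) - ystar‖ ≤ ‖ystar‖ +
      ∑ i ∈ Finset.range j, √(2 * ξ (i + 1) * μ (i + 1)) := by
    intro j
    induction j with
    | zero => simp [hy1]
    | succ j ih =>
      rw [Finset.sum_range_succ]
      have := hfej (j + 1) (by omega)
      linarith
  obtain ⟨M, hM⟩ : ∃ M, ∀ k, 1 ≤ k → ‖y k‖ ≤ M := by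
    refine ⟨‖ystar‖ + ‖ystar‖ + ∑' i, √(2 * ξ (i + 1) * μ (i + 1)), fun k hk => ?_⟩
    obtain ⟨j, rfl⟩ : ∃ j, k = j + 1 := ⟨k - 1, by omega⟩
    have h1 := hsumb j
    have h2 := hsum.sum_le_tsum (Finset.range j) (fun i _ => Real.sqrt_nonneg _)
    have h3 := norm_le_norm_sub_add (y (j + 1)) ystar
    linarith
  have hM0 : 0 ≤ M := (norm_nonneg _).trans (hM 1 le_rfl)
  have hdiff : ∀ k, 1 ≤ k → ‖y (k + 1) - y k‖ ≤ 2 * M := fun k hk => by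
    have := norm_sub_le (y (k + 1)) (y k)
    linarith [hM k hk, hM (k + 1) (by omega)]
  refine ⟨(2 * M + C₀ + M ^ 2 / 2 + ‖ystar‖ * (2 * M)) / μ₀, fun k hk => ?_⟩
  have hm := hμpos k hk
  have eC : (2 * M + C₀ + M ^ 2 / 2 + ‖ystar‖ * (2 * M)) / μ₀ / β ^ k
      = (2 * M + C₀ + M ^ 2 / 2 + ‖ystar‖ * (2 * M)) / μ k := by
    rw [hμ k hk, div_div, mul_comm μ₀]
  rw [eC]
  have hys : 0 ≤ ‖ystar‖ * (2 * M) := by positivity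
  obtain ⟨s, hs, hu, h1⟩ := hstep k hk
  have hlk := hlow2 k hk
  constructor
  · refine (infDist_le_dist_of_mem hs).trans ?_
    rw [hu, dist_eq_norm, sub_sub_cancel_left, norm_neg, norm_smul, norm_inv,
      Real.norm_of_nonneg hm.le, inv_mul_eq_div]
    have := hdiff k hk
    gcongr
    nlinarith [sq_nonneg M]
  · rw [abs_le]
    constructor
    · have h2 : ⟪ystar, y (k + 1) - y k⟫ ≤ ‖ystar‖ * (2 * M) :=
        (real_inner_le_norm _ _).trans (by gcongr; exact hdiff k hk)
      have h3 : (μ k)⁻¹ * ⟪ystar, y (k + 1) - y k⟫ ≤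
          (2 * M + C₀ + M ^ 2 / 2 + ‖ystar‖ * (2 * M)) / μ k := by
        rw [inv_mul_eq_div]
        gcongr
        nlinarith [sq_nonneg M]
      linarith
    · have h2 : ‖y k‖ ^ 2 ≤ M ^ 2 := pow_le_pow_left₀ (norm_nonneg _) (hM k hk) 2
      have h3 : ξ k - (‖y (k + 1)‖ ^ 2 - ‖y k‖ ^ 2) / (2 * μ k) ≤
          (2 * M + C₀ + M ^ 2 / 2 + ‖ystar‖ * (2 * M)) / μ k := by
        have h4 := hξμ k hk
        have h5 : C₀ / μ k - (‖y (k + 1)‖ ^ 2 - ‖y k‖ ^ 2) / (2 * μ k) =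
          (C₀ - (‖y (k + 1)‖ ^ 2 - ‖y k‖ ^ 2) / 2) / μ k := by
          field_simp
        have h6 : (C₀ - (‖y (k + 1)‖ ^ 2 - ‖y k‖ ^ 2) / 2) / μ k ≤
          (2 * M + C₀ + M ^ 2 / 2 + ‖ystar‖ * (2 * M)) / μ k := by
          gcongr
          nlinarith [sq_nonneg ‖y (k + 1)‖]
        linarith
      linarith
end

section
/- Suppose (P) has a KKT point y* (Assumption 1). Let β > 1, μ₀ > 0 and μ_k = β^k·μ₀ for k ≥ 1; let {ξ_k}_{k≥1} ⊂ [0, ∞) satisfy Σ_{k=1}^∞ √(2 ξ_k μ_k) < ∞ and ξ_k ≤ C₀/μ_k for some C₀ ≥ 0 and all k. Let {x_k}_{k≥1} ⊆ χ, y₁ = 0, y_{k+1} = μ_k·( Π_K(Ax_k − b − y_k/μ_k) − (Ax_k − b − y_k/μ_k) ), and suppose L_{μ_k}(x_k, y_k) ≤ g_{μ_k}(y_k) + ξ_k for all k ≥ 1. Then lim_{k→∞} p(x_k) = p* and lim_{k→∞} d_K(Ax_k − b) = 0; moreover, every accumulation point x̄ of the sequence {x_k} is an optimal solution of (P), i.e.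 x̄ ∈ χ, Ax̄ − b ∈ K and p(x̄) = p*. -/
open RealInnerProductSpace Metric

lemma cluster_eq_of_tendsto {E : Type*} [TopologicalSpace E] {x : ℕ → E} {a : E} {f : E → ℝ} {c : ℝ}
    (hf : Continuous f) (ha : MapClusterPt a Filter.atTop x)
    (h : Filter.Tendsto (fun k => f (x k)) Filter.atTop (nhds c)) : f a = c := by
  have h1 : MapClusterPt (f a) Filter.atTop (f ∘ x) := ha.continuousAt_comp hf.continuousAt
  have h2 : (nhds (f a) ⊓ Filter.map (f ∘ x) Filter.atTop).NeBot := h1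
  have h3 : (nhds (f a) ⊓ nhds c).NeBot := h2.mono (inf_le_inf_left _ h)
  exact eq_of_nhds_neBot h3

/-- convergence of the primal ALCC iterates. Under the hypotheses of
Statement 17, `p(x_k) → p*`, `d_K(Ax_k - b) → 0`, and every accumulation point `x̄` of
`{x_k}` is an optimal solution of (P): `x̄ ∈ χ`, `Ax̄ - b ∈ K` and `p(x̄) = p*`. -/
theorem stmt_18 {n m : ℕ} (K : Set (EuclideanSpace ℝ (Fin m)))
    (hKne : K.Nonempty) (hKcl : IsClosed K) (hKcv : Convex ℝ K)
    (hKcone : ∀ (c : ℝ), 0 ≤ c → ∀ x ∈ K, c • x ∈ K)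
    (A : EuclideanSpace ℝ (Fin n) →L[ℝ] EuclideanSpace ℝ (Fin m))
    (b : EuclideanSpace ℝ (Fin m))
    (χ : Set (EuclideanSpace ℝ (Fin n)))
    (hχne : χ.Nonempty) (hχcp : IsCompact χ) (hχcv : Convex ℝ χ)
    (p : EuclideanSpace ℝ (Fin n) → ℝ) (hp : ConvexOn ℝ Set.univ p)
    (hfeas : {x ∈ χ | A x - b ∈ K}.Nonempty)
    (ystar : EuclideanSpace ℝ (Fin m)) (hystar : ystar ∈ dualCone K)
    (hKKT : gzero A b χ p ystar = pstar A b K χ p)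
    -- `PK` is the Euclidean projection onto `K`
    (PK : EuclideanSpace ℝ (Fin m) → EuclideanSpace ℝ (Fin m))
    (hPKmem : ∀ v, PK v ∈ K)
    (hPK : ∀ v, ∀ s ∈ K, ‖v - PK v‖ ≤ ‖v - s‖)
    (β μ₀ : ℝ) (hβ : 1 < β) (hμ₀ : 0 < μ₀)
    (μ : ℕ → ℝ) (hμ : ∀ k, 1 ≤ k → μ k = β ^ k * μ₀)
    (ξ : ℕ → ℝ) (hξ : ∀ k, 1 ≤ k → 0 ≤ ξ k)
    (hsum : Summable (fun k : ℕ => Real.sqrt (2 * ξ (k + 1) * μ (k + 1))))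
    (C₀ : ℝ) (hC₀ : 0 ≤ C₀) (hξμ : ∀ k, 1 ≤ k → ξ k ≤ C₀ / μ k)
    (x : ℕ → EuclideanSpace ℝ (Fin n)) (hx : ∀ k, 1 ≤ k → x k ∈ χ)
    (y : ℕ → EuclideanSpace ℝ (Fin m)) (hy1 : y 1 = 0)
    (hyrec : ∀ k, 1 ≤ k → y (k + 1)
      = μ k • (PK (A (x k) - b - (μ k)⁻¹ • y k) - (A (x k) - b - (μ k)⁻¹ • y k)))
    (hL : ∀ k, 1 ≤ k →
      Lpen A b K p (μ k) (x k) (y k) ≤ gmu A b K χ p (μ k) (y k) + ξ k) :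
    Filter.Tendsto (fun k => p (x k)) Filter.atTop (nhds (pstar A b K χ p)) ∧
    Filter.Tendsto (fun k => infDist (A (x k) - b) K) Filter.atTop (nhds 0) ∧
    ∀ xbar : EuclideanSpace ℝ (Fin n), MapClusterPt xbar Filter.atTop x →
      xbar ∈ χ ∧ A xbar - b ∈ K ∧ p xbar = pstar A b K χ p := by
  have hpc : Continuous p := by
    have := hp.continuousOn isOpen_univ
    exact continuousOn_univ.mp this
  have hμpos : ∀ k, 1 ≤ k → 0 < μ k := fun k hk => by
    rw [hμ k hk]; positivity
  set P := pstar A b K χ p with hP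
  obtain ⟨m0, hm0⟩ : BddBelow (p '' χ) := (hχcp.image hpc).bddBelow
  have hdist : ∀ v, infDist v K = ‖v - PK v‖ := by
    intro v
    apply le_antisymm
    · rw [← dist_eq_norm]; exact infDist_le_dist_of_mem (hPKmem v)
    · apply (le_infDist hKne).2
      intro s hs
      rw [dist_eq_norm]; exact hPK v s hs
  have hyn : ∀ k, 1 ≤ k → infDist (A (x k) - b - (μ k)⁻¹ • y k) K = ‖y (k+1)‖ / μ k := by
    intro k hk
    have h := hμpos k hk
    rw [hdist, hyrec k hk, norm_smul, Real.norm_of_nonneg h.le, norm_sub_rev]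
    field_simp
  have hres : ∀ k, 1 ≤ k → A (x k) - b
      = PK (A (x k) - b - (μ k)⁻¹ • y k) - (μ k)⁻¹ • (y (k+1) - y k) := by
    intro k hk
    have h := (hμpos k hk).ne'
    rw [hyrec k hk, smul_sub, smul_smul, inv_mul_cancel₀ h, one_smul]
    abel
  have hgle : ∀ k, 1 ≤ k → gmu A b K χ p (μ k) (y k) ≤ P := by
    intro k hk
    have h := hμpos k hk
    apply le_csInf (hfeas.image p)
    rintro _ ⟨z, ⟨hz, hzK⟩, rfl⟩
    have hb : BddBelow ((fun x => Lpen A b K p (μ k) x (y k)) '' χ) := by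
      refine ⟨m0 - ‖y k‖^2 / (2 * μ k), ?_⟩
      rintro _ ⟨w, hw, rfl⟩
      have := hm0 ⟨w, hw, rfl⟩
      have h2 : 0 ≤ μ k / 2 * (infDist (A w - b - (μ k)⁻¹ • y k) K) ^ 2 := by positivity
      simp only [Lpen]
      linarith
    refine (csInf_le hb ⟨z, hz, rfl⟩).trans ?_
    have h1 : infDist (A z - b - (μ k)⁻¹ • y k) K ≤ ‖y k‖ / μ k := by
      refine (infDist_le_dist_of_mem hzK).trans ?_
      rw [dist_eq_norm, norm_sub_rev, sub_sub_cancel, norm_smul, norm_inv, Real.norm_of_nonneg h.le]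
      apply le_of_eq; field_simp
    have h2 : (infDist (A z - b - (μ k)⁻¹ • y k) K)^2 ≤ (‖y k‖ / μ k)^2 :=
      pow_le_pow_left₀ infDist_nonneg h1 2
    have h3 : μ k / 2 * (infDist (A z - b - (μ k)⁻¹ • y k) K)^2 ≤ μ k / 2 * (‖y k‖ / μ k)^2 :=
      mul_le_mul_of_nonneg_left h2 (by positivity)
    have h4 : μ k / 2 * (‖y k‖ / μ k)^2 = ‖y k‖^2 / (2 * μ k) := by field_simp
    simp only [Lpen]
    linarith
  have hup : ∀ k, 1 ≤ k → p (x k) + ‖y (k+1)‖^2 / (2 * μ k) - ‖y k‖^2 / (2 * μ k) ≤ P + ξ k := by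
    intro k hk
    have h := hμpos k hk
    have h1 := hL k hk
    have h2 := hgle k hk
    simp only [Lpen] at h1
    rw [hyn k hk] at h1
    have h4 : μ k / 2 * (‖y (k+1)‖ / μ k)^2 = ‖y (k+1)‖^2 / (2 * μ k) := by field_simp
    linarith
  have hlow : ∀ k, 1 ≤ k → P - (μ k)⁻¹ * ⟪ystar, y (k+1) - y k⟫ ≤ p (x k) := by
    intro k hk
    have hb : BddBelow ((fun x => p x - ⟪ystar, A x - b⟫) '' χ) := by
      apply (hχcp.image _).bddBelow
      fun_prop
    have h1 : gzero A b χ p ystar ≤ p (x k) - ⟪ystar, A (x k) - b⟫ :=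
      csInf_le hb ⟨x k, hx k hk, rfl⟩
    rw [hKKT, hres k hk, inner_sub_right, inner_smul_right] at h1
    have h2 := hystar _ (hPKmem (A (x k) - b - (μ k)⁻¹ • y k))
    linarith
  have hstep : ∀ k, 1 ≤ k → ‖y (k+1) - ystar‖ ≤ ‖y k - ystar‖ + Real.sqrt (2 * ξ k * μ k) := by
    intro k hk
    have h := hμpos k hk
    have h1 := hup k hk
    have h2 := hlow k hk
    have hξk := hξ k hk
    have e1 := norm_sub_sq_real (y (k+1)) ystar
    have e2 := norm_sub_sq_real (y k) ystar
    rw [inner_sub_right, real_inner_comm, real_inner_comm (y k)] at h2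
    have h3 : (‖y (k+1)‖^2 - ‖y k‖^2 - 2 * (⟪y (k+1), ystar⟫ - ⟪y k, ystar⟫)) / (2 * μ k) ≤ ξ k := by
      have : (‖y (k+1)‖^2 - ‖y k‖^2 - 2 * (⟪y (k+1), ystar⟫ - ⟪y k, ystar⟫)) / (2 * μ k)
        = ‖y (k+1)‖^2 / (2 * μ k) - ‖y k‖^2 / (2 * μ k)
          - (μ k)⁻¹ * (⟪y (k+1), ystar⟫ - ⟪y k, ystar⟫) := by field_simp
      linarith
    rw [div_le_iff₀ (by positivity)] at h3
    have hs0 := Real.sqrt_nonneg (2 * ξ k * μ k)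
    have hs := Real.sq_sqrt (show 0 ≤ 2 * ξ k * μ k by positivity)
    apply abs_le_of_sq_le_sq' _ (by positivity) |>.2
    have := mul_nonneg (norm_nonneg (y k - ystar)) hs0
    nlinarith
  have hbd : ∀ k : ℕ, ‖y (k+1) - ystar‖ ≤ ‖ystar‖
      + ∑ i ∈ Finset.range k, Real.sqrt (2 * ξ (i + 1) * μ (i + 1)) := by
    intro k
    induction k with
    | zero => simp [hy1]
    | succ k ih =>
      rw [Finset.sum_range_succ]
      have := hstep (k+1) (by omega)
      linarith
  obtain ⟨B, hB0, hB⟩ : ∃ B : ℝ, 0 ≤ B ∧ ∀ k, 1 ≤ k → ‖y k‖ ≤ B := by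
    refine ⟨‖ystar‖ + ‖ystar‖ + ∑' i : ℕ, Real.sqrt (2 * ξ (i + 1) * μ (i + 1)), ?_, ?_⟩
    · have : 0 ≤ ∑' i : ℕ, Real.sqrt (2 * ξ (i + 1) * μ (i + 1)) :=
        tsum_nonneg (fun i => Real.sqrt_nonneg _)
      positivity
    · intro k hk
      obtain ⟨j, rfl⟩ : ∃ j, k = j + 1 := ⟨k - 1, by omega⟩
      have h1 := hbd j
      have h2 := hsum.sum_le_tsum (Finset.range j) (fun i _ => Real.sqrt_nonneg _)
      have h3 := norm_le_norm_sub_add (y (j+1)) ystar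
      linarith
  have hinv : Filter.Tendsto (fun k => (μ k)⁻¹) Filter.atTop (nhds 0) := by
    have h1 : Filter.Tendsto (fun k : ℕ => β ^ k * μ₀) Filter.atTop Filter.atTop :=
      (tendsto_pow_atTop_atTop_of_one_lt hβ).atTop_mul_const hμ₀
    refine (h1.inv_tendsto_atTop).congr' ?_
    filter_upwards [Filter.eventually_ge_atTop 1] with k hk
    simp [hμ k hk]
  have hd : ∀ k, 1 ≤ k → ‖y (k+1) - y k‖ ≤ 2 * B := fun k hk => by
    have := norm_sub_le (y (k+1)) (y k)
    have := hB k hk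
    have := hB (k+1) (by omega)
    linarith
  have hpt : Filter.Tendsto (fun k => p (x k)) Filter.atTop (nhds P) := by
    have hl : Filter.Tendsto (fun k => P - (μ k)⁻¹ * (‖ystar‖ * (2 * B))) Filter.atTop (nhds P) := by
      simpa using (hinv.mul_const (‖ystar‖ * (2 * B))).const_sub P
    have hu : Filter.Tendsto (fun k => P + (μ k)⁻¹ * (C₀ + B^2 / 2)) Filter.atTop (nhds P) := by
      simpa using (hinv.mul_const (C₀ + B^2 / 2)).const_add P
    refine tendsto_of_tendsto_of_tendsto_of_le_of_le' hl hu ?_ ?_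
    · filter_upwards [Filter.eventually_ge_atTop 1] with k hk
      have h := hμpos k hk
      have h1 := hlow k hk
      have h2 : ⟪ystar, y (k+1) - y k⟫ ≤ ‖ystar‖ * (2 * B) :=
        (real_inner_le_norm _ _).trans (mul_le_mul_of_nonneg_left (hd k hk) (norm_nonneg _))
      have h3 := mul_le_mul_of_nonneg_left h2 (inv_pos.2 h).le
      linarith
    · filter_upwards [Filter.eventually_ge_atTop 1] with k hk
      have h := hμpos k hk
      have h1 := hup k hk
      have h2 := hξμ k hk
      have h3 : 0 ≤ ‖y (k+1)‖^2 / (2 * μ k) := by positivity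
      have h4 : ‖y k‖^2 / (2 * μ k) ≤ B^2 / (2 * μ k) := by
        have := hB k hk
        gcongr
      have h5 : (μ k)⁻¹ * (C₀ + B^2 / 2) = C₀ / μ k + B^2 / (2 * μ k) := by field_simp
      linarith
  have hdt : Filter.Tendsto (fun k => infDist (A (x k) - b) K) Filter.atTop (nhds 0) := by
    have hu : Filter.Tendsto (fun k => (μ k)⁻¹ * (2 * B)) Filter.atTop (nhds 0) := by
      simpa using hinv.mul_const (2 * B)
    refine tendsto_of_tendsto_of_tendsto_of_le_of_le' tendsto_const_nhds hu
      (Filter.Eventually.of_forall fun _ => infDist_nonneg) ?_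
    filter_upwards [Filter.eventually_ge_atTop 1] with k hk
    have h := hμpos k hk
    refine (infDist_le_dist_of_mem (hPKmem (A (x k) - b - (μ k)⁻¹ • y k))).trans ?_
    have e : A (x k) - b - PK (A (x k) - b - (μ k)⁻¹ • y k) = -((μ k)⁻¹ • (y (k+1) - y k)) := by
      have := hres k hk
      rw [sub_eq_iff_eq_add]
      rw [neg_add_eq_sub]
      exact this
    rw [dist_eq_norm, e, norm_neg, norm_smul, norm_inv, Real.norm_of_nonneg h.le]
    exact mul_le_mul_of_nonneg_left (hd k hk) (inv_pos.2 h).le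
  refine ⟨hpt, hdt, fun xbar hxb => ⟨?_, ?_, ?_⟩⟩
  · have h1 : Filter.Tendsto (fun k => infDist (x k) χ) Filter.atTop (nhds 0) := by
      refine tendsto_const_nhds.congr' ?_
      filter_upwards [Filter.eventually_ge_atTop 1] with k hk
      exact (infDist_zero_of_mem (hx k hk)).symm
    have := cluster_eq_of_tendsto (f := fun z => infDist z χ) (continuous_infDist_pt χ) hxb h1
    exact (hχcp.isClosed.mem_iff_infDist_zero hχne).2 this
  · have := cluster_eq_of_tendsto (f := fun z => infDist (A z - b) K)
      ((continuous_infDist_pt K).comp (by fun_prop)) hxb hdt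
    exact (hKcl.mem_iff_infDist_zero hKne).2 this
  · exact cluster_eq_of_tendsto hpc hxb hpt
end
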